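/- There exists a real number τ > 0 such that every graph G that is both C₆-free and (complement of C₆)-free satisfies max(α(G), ω(G)) ≥ |G|^τ; that is, {C₆, C̄₆} has the Erdős–Hajnal property. -/

import Mathlib

open SimpleGraph

/-- The independence (stable set) number of a graph: the clique number of the complement. -/
noncomputable def alphaNum {V : Type*} (G : SimpleGraph V) : ℕ := Gᶜ.cliqueNum

/-- The clique number of a graph. -/
noncomputable def omegaNum {V : Type*} (G : SimpleGraph V) : ℕ := G.cliqueNum

/-- κ(G) = α(G)·ω(G). -/
noncomputable def kappaNum {V : Type*} (G : SimpleGraph V) : ℕ := alphaNum G * omegaNum G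

/-!
Every graph without an induced hexagon or antihexagon satisfies a polynomial form of Rödl's theorem:
for every small `y`, each vertex set `T` has a subset of size at least `y ^ C * |T|` in which the
graph or its complement has maximum degree at most a `y`-fraction. With `y` a small negative power
of the number of vertices, a maximal stable set or clique of this subset is polynomially large.

The polynomial form is proved along scales `t`, `t ^ 2`, `t ^ 4`, ... starting from Rödl's theorem.
A vertex set for which the passage from `t` to `t ^ 2` fails contains a set `S` that is sparse, in
the graph or in its complement, but none of whose large subsets is much sparser. Brooms or stars
are chosen greedily in `S` so that they hardly see each other; any edge between the leaves of two
of them would then close a hexagon, so that the leaves, after deleting a few, form many large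
pairwise anticomplete sets. Finding such families again inside their members, in the graph or in its
complement, yields `p` pairwise anticomplete and `q` pairwise complete sets with `p * q` large, and
the union of the larger of the two families is the desired restricted set.
-/

namespace ErdosHajnal

open Finset
open scoped Classical

/-! ### Counting -/

section Counting

variable {ι α β : Type*} {A B : Finset α} {P Q R : α → Prop}

/-- The number of elements of `A` with property `P`, as a real number: all densities below are
real, and the decidability of `P` is kept out of the statements. -/
noncomputable def count (A : Finset α) (P : α → Prop) : ℝ := #{x ∈ A | P x}

theorem coe_card_filter (A : Finset α) (P : α → Prop) [DecidablePred P] :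
    (#{x ∈ A | P x} : ℝ) = count A P := by
  unfold count
  congr

theorem count_nonneg (A : Finset α) (P : α → Prop) : 0 ≤ count A P := Nat.cast_nonneg _

theorem count_le_card (A : Finset α) (P : α → Prop) : count A P ≤ #A :=
  Nat.cast_le.2 (card_filter_le _ _)

theorem count_mono (hAB : A ⊆ B) (h : ∀ x ∈ A, P x → Q x) : count A P ≤ count B Q :=
  Nat.cast_le.2 <| card_le_card fun x hx => by
    rw [mem_filter] at hx ⊢
    exact ⟨hAB hx.1, h x hx.1 hx.2⟩

theorem count_le_add (h : ∀ x ∈ A, P x → Q x ∨ R x) : count A P ≤ count A Q + count A R := by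
  unfold count
  have hsub : {x ∈ A | P x} ⊆ {x ∈ A | Q x} ∪ {x ∈ A | R x} := fun x hx => by
    rw [mem_filter] at hx
    rw [mem_union, mem_filter, mem_filter]
    exact (h x hx.1 hx.2).imp (⟨hx.1, ·⟩) (⟨hx.1, ·⟩)
  exact_mod_cast (card_le_card hsub).trans (card_union_le _ _)

theorem count_or_le (A : Finset α) (P Q : α → Prop) :
    count A (fun x => P x ∨ Q x) ≤ count A P + count A Q :=
  count_le_add fun _ _ h => h

theorem count_add_count_not (A : Finset α) (P : α → Prop) :
    count A P + count A (fun x => ¬ P x) = #A := by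
  rw [← coe_card_filter A P, ← coe_card_filter A fun x => ¬ P x]
  exact_mod_cast card_filter_add_card_filter_not P

theorem exists_mem_of_count_pos (h : 0 < count A P) : ∃ x ∈ A, P x := by
  obtain ⟨x, hx⟩ := card_pos.1 (Nat.cast_pos.1 h)
  exact ⟨x, mem_filter.1 hx⟩

theorem count_le_count_add_card_sub (h : A ⊆ B) (P : α → Prop) :
    count B P ≤ count A P + (#B - #A) := by
  have hsub : {x ∈ B | P x} ⊆ {x ∈ A | P x} ∪ B \ A := fun x hx => by
    rw [mem_filter] at hx
    rw [mem_union, mem_filter, mem_sdiff]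
    tauto
  rw [← cast_card_sdiff h]
  unfold count
  exact_mod_cast (card_le_card hsub).trans (card_union_le _ _)

theorem count_exists_mem_le {s : Finset ι} {P : ι → α → Prop} {u K c : ℝ} (hs : #s * u ≤ K)
    (hc : 0 ≤ c) (h : ∀ i ∈ s, count A (P i) ≤ u * c) :
    count A (fun x => ∃ i ∈ s, P i x) ≤ K * c := by
  have hsub : {x ∈ A | ∃ i ∈ s, P i x} ⊆ s.biUnion fun i => {x ∈ A | P i x} := fun x hx => by
    obtain ⟨hxA, i, hi, hx⟩ := mem_filter.1 hx
    exact mem_biUnion.2 ⟨i, hi, mem_filter.2 ⟨hxA, hx⟩⟩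
  calc count A (fun x => ∃ i ∈ s, P i x) ≤ ∑ i ∈ s, count A (P i) := by
        simp only [← coe_card_filter]
        exact_mod_cast (card_le_card hsub).trans card_biUnion_le
    _ ≤ #s * (u * c) := by
        rw [← nsmul_eq_mul]
        exact sum_le_card_nsmul _ _ _ h
    _ ≤ K * c := by
        rw [← mul_assoc]
        exact mul_le_mul_of_nonneg_right hs hc

theorem count_exists_mem_list_le {l : List ι} {P : ι → α → Prop} {u K c : ℝ} (hu : 0 ≤ u)
    (hl : l.length * u ≤ K) (hc : 0 ≤ c) (h : ∀ i ∈ l, count A (P i) ≤ u * c) :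
    count A (fun x => ∃ i ∈ l, P i x) ≤ K * c := by
  have hcard : (#l.toFinset : ℝ) * u ≤ K :=
    (mul_le_mul_of_nonneg_right (Nat.cast_le.2 l.toFinset_card_le) hu).trans hl
  simpa only [List.mem_toFinset] using
    count_exists_mem_le (s := l.toFinset) hcard hc fun i hi => h i (List.mem_toFinset.1 hi)

theorem half_card_le_count_forall_not {l : List ι} {P : ι → α → Prop} {u : ℝ} (hu : 0 ≤ u)
    (hl : l.length * u ≤ 1 / 2) (h : ∀ i ∈ l, count A (P i) ≤ u * #A) :
    (#A : ℝ) / 2 ≤ count A (fun x => ∀ i ∈ l, ¬ P i x) := by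
  have hbad := count_exists_mem_list_le hu hl (Nat.cast_nonneg #A) h
  have hsum := count_add_count_not A (fun x => ∃ i ∈ l, P i x)
  simp only [not_exists, not_and] at hsum
  linarith

theorem sum_count_comm (A : Finset α) (B : Finset β) (R : α → β → Prop) :
    ∑ a ∈ A, count B (R a) = ∑ b ∈ B, count A (fun a => R a b) := by
  unfold count
  exact_mod_cast sum_card_bipartiteAbove_eq_sum_card_bipartiteBelow R

theorem mul_count_le_sum {f : α → ℝ} (hf : ∀ a ∈ A, 0 ≤ f a) (c : ℝ) :
    c * count A (fun a => c ≤ f a) ≤ ∑ a ∈ A, f a := by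
  calc c * count A (fun a => c ≤ f a) = ∑ a ∈ A with c ≤ f a, c := by
        rw [sum_const, nsmul_eq_mul, mul_comm, coe_card_filter]
    _ ≤ ∑ a ∈ A with c ≤ f a, f a := sum_le_sum fun a ha => (mem_filter.1 ha).2
    _ ≤ ∑ a ∈ A, f a :=
        sum_le_sum_of_subset_of_nonneg (filter_subset _ _) fun a ha _ => hf a ha

theorem count_le_of_forall_count_le {B : Finset β} {R : α → β → Prop} {d ε δ : ℝ} (hε : 0 < ε)
    (hB : B.Nonempty) (hd : ∀ b ∈ B, count A (fun a => R a b) ≤ d) (h : d ≤ ε * δ) :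
    count A (fun a => ε * #B ≤ count B (R a)) ≤ δ := by
  have hBpos : (0 : ℝ) < #B := Nat.cast_pos.2 hB.card_pos
  refine le_of_mul_le_mul_left ?_ (mul_pos hε hBpos)
  calc ε * #B * count A (fun a => ε * #B ≤ count B (R a))
      ≤ ∑ a ∈ A, count B (R a) := mul_count_le_sum (fun a _ => count_nonneg _ _) _
    _ = ∑ b ∈ B, count A (fun a => R a b) := sum_count_comm _ _ _
    _ ≤ #B * d := by
        rw [← nsmul_eq_mul]
        exact sum_le_card_nsmul _ _ _ hd
    _ ≤ ε * #B * δ := by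
        rw [mul_right_comm, mul_comm (#B : ℝ)]
        exact mul_le_mul_of_nonneg_right h hBpos.le

theorem exists_mem_le_count {B : Finset β} {R : α → β → Prop} {d e : ℝ}
    (hd : ∀ b ∈ B, d ≤ count A (fun a => R a b)) (h : #A * e < #B * d) :
    ∃ a ∈ A, e ≤ count B (R a) := by
  by_contra! hlt
  refine h.not_ge ?_
  calc #B * d ≤ ∑ b ∈ B, count A (fun a => R a b) := by
        rw [← nsmul_eq_mul]
        exact card_nsmul_le_sum _ _ _ hd
    _ = ∑ a ∈ A, count B (R a) := (sum_count_comm _ _ _).symm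
    _ ≤ #A * e := by
        rw [← nsmul_eq_mul]
        exact sum_le_card_nsmul _ _ _ fun a ha => (hlt a ha).le

theorem nonempty_of_pos_of_le_card {x : ℝ} (hx : 0 < x) (h : x ≤ #A) : A.Nonempty :=
  card_pos.1 (Nat.cast_pos.1 (hx.trans_le h))

theorem exists_subset_between (f : Finset α → ℝ) {c d : ℝ} (h0 : f ∅ < c)
    (X : Finset α) (h : ∀ s ⊆ X, ∀ a ∈ X, f (insert a s) ≤ f s + d) (hX : c ≤ f X) :
    ∃ R ⊆ X, c ≤ f R ∧ f R ≤ c + d := by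
  induction X using Finset.induction_on with
  | empty => linarith
  | insert a s _ ih =>
    by_cases hs : c ≤ f s
    · obtain ⟨R, hR, hfR⟩ := ih (fun u hu b hb => h u (hu.trans (subset_insert _ _)) b
        (mem_insert_of_mem hb)) hs
      exact ⟨R, hR.trans (subset_insert _ _), hfR⟩
    · have := h s (subset_insert _ _) a (mem_insert_self _ _)
      exact ⟨insert a s, subset_rfl, hX, by linarith⟩

end Counting

/-! ### Powers of a small scale -/

section Scale

variable {t n : ℝ} {a b : ℕ}

theorem pow_mul_le_of_lt (ht : 0 < t) (ht1 : t ≤ 1 / 100) (hn : 0 ≤ n) (h : a < b) :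
    t ^ b * n ≤ t ^ a * n / 100 := by
  calc t ^ b * n ≤ t ^ (a + 1) * n :=
        mul_le_mul_of_nonneg_right (pow_le_pow_of_le_one ht.le (by linarith) h) hn
    _ = t ^ a * n * t := by ring
    _ ≤ t ^ a * n * (1 / 100) := by gcongr
    _ = t ^ a * n / 100 := by ring

theorem pow_le_of_pos (ht : 0 < t) (ht1 : t ≤ 1 / 100) (hb : 0 < b) : t ^ b ≤ 1 / 100 := by
  simpa using pow_mul_le_of_lt ht ht1 zero_le_one hb

theorem ceil_inv_mul_le (ht : 0 < t) (ht1 : t ≤ 1 / 100) : (⌈1 / t⌉₊ : ℝ) * t ≤ 2 := by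
  have hceil := mul_le_mul_of_nonneg_right (Nat.ceil_lt_add_one (one_div_pos.2 ht).le).le ht.le
  rw [add_mul, one_div_mul_cancel ht.ne'] at hceil
  linarith

end Scale

/-! ### Greedy selection -/

section Greedy

variable {ι α : Type*}

theorem exists_list_of_step (I : List ι → Prop) (k : ℕ) (hnil : I [])
    (hstep : ∀ l, l.length < k → I l → ∃ p, I (p :: l)) : ∃ l, l.length = k ∧ I l := by
  have hle : ∀ j ≤ k, ∃ l, l.length = j ∧ I l := by
    intro j
    induction j with
    | zero => exact fun _ => ⟨[], rfl, hnil⟩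
    | succ j ih =>
      intro hj
      obtain ⟨l, hl, hI⟩ := ih (by omega)
      obtain ⟨p, hp⟩ := hstep l (by omega) hI
      exact ⟨p :: l, by simp [hl], hp⟩
  exact hle k le_rfl

theorem exists_pairwise_list_of_extend {X E : Finset α} {root : ι → α} {body : ι → Finset α}
    {spoil forbid : ι → α → Prop} {Good : ι → Prop} {k : ℕ} {c d : ℝ} (hc : 0 ≤ c) (hd : 0 ≤ d)
    (hkc : k * c ≤ 1 / 2) (hspoil : ∀ o, Good o → count X (spoil o) ≤ c * #X)
    (hextend : ∀ Y ⊆ X, (#X : ℝ) / 2 ≤ #Y → ∀ W, count E W ≤ k * d → ∃ p, Good p ∧ root p ∈ Y ∧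
      (∀ z ∈ body p, ¬ W z) ∧ count E (fun z => forbid p z ∧ ¬ W z) ≤ d) :
    ∃ l : List ι, l.length = k ∧ (∀ p ∈ l, Good p) ∧
      l.Pairwise fun p o => ¬ spoil o (root p) ∧ ∀ z ∈ body p, ¬ forbid o z := by
  let Inv (l : List ι) : Prop := (∀ p ∈ l, Good p) ∧
    l.Pairwise (fun p o => ¬ spoil o (root p) ∧ ∀ z ∈ body p, ¬ forbid o z) ∧
    count E (fun z => ∃ o ∈ l, forbid o z) ≤ l.length * d
  suffices hstep : ∀ l, l.length < k → Inv l → ∃ p, Inv (p :: l) by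
    obtain ⟨l, hl, hgood, hpair, -⟩ := exists_list_of_step Inv k
      ⟨by simp, List.Pairwise.nil, by simp [count]⟩ hstep
    exact ⟨l, hl, hgood, hpair⟩
  rintro l hlk ⟨hgood, hpair, hcount⟩
  have hlength : (l.length : ℝ) ≤ k := Nat.cast_le.2 hlk.le
  have hY := half_card_le_count_forall_not hc ((mul_le_mul_of_nonneg_right hlength hc).trans hkc)
    fun o ho => hspoil o (hgood o ho)
  rw [← coe_card_filter] at hY
  obtain ⟨p, hp, hroot, hbody, hnew⟩ := hextend _ (filter_subset _ _) hY _
    (hcount.trans (mul_le_mul_of_nonneg_right hlength hd))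
  refine ⟨p, List.forall_mem_cons.2 ⟨hp, hgood⟩, List.pairwise_cons.2 ⟨fun o ho =>
    ⟨(mem_filter.1 hroot).2 o ho, fun z hz hoz => hbody z hz ⟨o, ho, hoz⟩⟩, hpair⟩, ?_⟩
  have hsplit : count E (fun z => ∃ o ∈ p :: l, forbid o z) ≤
      count E (fun z => ∃ o ∈ l, forbid o z) +
        count E (fun z => forbid p z ∧ ¬ ∃ o ∈ l, forbid o z) :=
    count_le_add fun z _ hz => by
      rw [List.exists_mem_cons_iff] at hz
      exact (em (∃ o ∈ l, forbid o z)).imp_right fun hold => ⟨hz.resolve_right hold, hold⟩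
  rw [List.length_cons]
  push_cast
  linarith

/-- The part of the `i`-th block of a list that is not spoilt by an earlier entry. -/
noncomputable def trim (l : List ι) (B : ι → Finset α) (bad : ι → ι → α → Prop)
    (i : Fin l.length) : Finset α :=
  {y ∈ B l[i] | ∀ q ∈ l.take i, ¬ bad q l[i] y}

variable {l : List ι} {B : ι → Finset α} {bad : ι → ι → α → Prop}

theorem trim_subset (i : Fin l.length) : trim l B bad i ⊆ B l[i] := filter_subset _ _

theorem not_bad_of_mem_trim {i j : Fin l.length} (hij : i < j) {y : α}
    (hy : y ∈ trim l B bad j) : ¬ bad l[i] l[j] y :=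
  (mem_filter.1 hy).2 _ (List.mem_take_iff_getElem.2 ⟨i, by simpa using hij, rfl⟩)

theorem half_card_le_card_trim {c : ℝ} (hc : 0 ≤ c) (hlc : l.length * c ≤ 1 / 2)
    (hl : l.Pairwise fun q p => count (B p) (bad q p) ≤ c * #(B p)) (i : Fin l.length) :
    (#(B l[i]) : ℝ) / 2 ≤ #(trim l B bad i) := by
  unfold trim
  rw [coe_card_filter]
  refine half_card_le_count_forall_not hc (le_trans ?_ hlc) fun q hq => ?_
  · gcongr
    exact List.length_take_le' _ _
  · obtain ⟨j, hj, rfl⟩ := List.mem_take_iff_getElem.1 hq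
    exact List.pairwise_iff_getElem.1 hl j i (by omega) i.2 (by omega)

end Greedy

/-! ### Heavy vertices, sparse sets and anticomplete families -/

section Families

variable {ι V : Type*} {G : SimpleGraph V} {A B S T X : Finset V} {s k y ε : ℝ}

/-- `z` is adjacent to at least an `ε`-fraction of `B`. -/
def Heavy (G : SimpleGraph V) (ε : ℝ) (B : Finset V) (z : V) : Prop :=
  ε * #B ≤ count B (G.Adj z)

theorem count_heavy_le {d δ : ℝ} (hε : 0 < ε) (hB : B.Nonempty)
    (hd : ∀ b ∈ B, count A (G.Adj b) ≤ d) (h : d ≤ ε * δ) : count A (Heavy G ε B) ≤ δ :=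
  count_le_of_forall_count_le hε hB (by simpa only [G.adj_comm] using hd) h

/-- `z` has a neighbour in `X`. -/
def HasNbrIn (G : SimpleGraph V) (X : Finset V) (z : V) : Prop := ∃ x ∈ X, G.Adj x z

/-- Every vertex of `S` has at most `y * |S|` neighbours in `S`. -/
def Sparse (G : SimpleGraph V) (y : ℝ) (S : Finset V) : Prop :=
  ∀ x ∈ S, count S (G.Adj x) ≤ y * #S

/-- `S` is `y`-restricted: sparse in the graph or in its complement. -/
def Restricted (G : SimpleGraph V) (y : ℝ) (S : Finset V) : Prop :=
  Sparse G y S ∨ Sparse Gᶜ y S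

theorem Restricted.mono {y' : ℝ} (h : Restricted G y S) (hy : y ≤ y') : Restricted G y' S :=
  have sparse_mono {H : SimpleGraph V} (h : Sparse H y S) : Sparse H y' S := fun x hx =>
    (h x hx).trans (mul_le_mul_of_nonneg_right hy (Nat.cast_nonneg _))
  h.imp sparse_mono sparse_mono

theorem restricted_compl : Restricted Gᶜ y S ↔ Restricted G y S := by
  rw [Restricted, Restricted, compl_compl, or_comm]

/-- `T` has a `y`-restricted subset that contains at least a `c`-fraction of `T`. -/
def HasRestrictedSubset (G : SimpleGraph V) (c y : ℝ) (T : Finset V) : Prop :=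
  ∃ S ⊆ T, c * #T ≤ #S ∧ Restricted G y S

theorem hasRestrictedSubset_compl {c : ℝ} :
    HasRestrictedSubset Gᶜ c y T ↔ HasRestrictedSubset G c y T := by
  simp only [HasRestrictedSubset, restricted_compl]

theorem HasRestrictedSubset.mono {T' : Finset V} {c c' y' : ℝ} (h : HasRestrictedSubset G c y T)
    (hT : T ⊆ T') (hc : c' * #T' ≤ c * #T) (hy : y ≤ y') : HasRestrictedSubset G c' y' T' := by
  obtain ⟨S, hST, hcard, hS⟩ := h
  exact ⟨S, hST.trans hT, hc.trans hcard, hS.mono hy⟩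

/-- `A` and `B` are disjoint and no edge joins them. -/
def Anticomplete (G : SimpleGraph V) (A B : Finset V) : Prop :=
  ∀ x ∈ A, ∀ y ∈ B, x ≠ y ∧ ¬ G.Adj x y

theorem Anticomplete.symm (h : Anticomplete G A B) : Anticomplete G B A := fun x hx y hy =>
  ⟨(h y hy x hx).1.symm, fun hxy => (h y hy x hx).2 hxy.symm⟩

/-- `T` contains at least `k` pairwise anticomplete subsets, each of size at least `s`. -/
def HasAnticompleteFamily (G : SimpleGraph V) (T : Finset V) (s k : ℝ) : Prop :=
  ∃ (ι : Type) (_ : Fintype ι) (B : ι → Finset V), k ≤ Fintype.card ι ∧ (∀ i, B i ⊆ T) ∧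
    (∀ i, s ≤ #(B i)) ∧ Pairwise fun i j => Anticomplete G (B i) (B j)

theorem HasAnticompleteFamily.mono {T' : Finset V} {s' k' : ℝ}
    (h : HasAnticompleteFamily G T s k) (hT : T ⊆ T') (hs : s' ≤ s) (hk : k' ≤ k) :
    HasAnticompleteFamily G T' s' k' := by
  obtain ⟨ι, hι, B, hcard, hsub, hsize, hB⟩ := h
  exact ⟨ι, hι, B, hk.trans hcard, fun i => (hsub i).trans hT, fun i => hs.trans (hsize i), hB⟩

theorem HasAnticompleteFamily.zero (G : SimpleGraph V) (T : Finset V) (s : ℝ) :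
    HasAnticompleteFamily G T s 0 :=
  ⟨Empty, inferInstance, fun i => i.elim, by simp, by simp, by simp, fun i => i.elim⟩

theorem HasAnticompleteFamily.insert (h : HasAnticompleteFamily G A s k) (hAT : A ⊆ T)
    (hXT : X ⊆ T) (hX : s ≤ #X) (hXA : Anticomplete G X A) :
    HasAnticompleteFamily G T s (k + 1) := by
  obtain ⟨ι, hι, B, hcard, hsub, hsize, hB⟩ := h
  have hXB : ∀ i, Anticomplete G X (B i) := fun i x hx y hy => hXA x hx y (hsub i hy)
  refine ⟨Option ι, inferInstance, fun o => o.elim X B, ?_, ?_, ?_, ?_⟩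
  · rw [Fintype.card_option]
    push_cast
    linarith
  · exact Option.forall.2 ⟨hXT, fun i => (hsub i).trans hAT⟩
  · exact Option.forall.2 ⟨hX, hsize⟩
  · rintro (_ | i) (_ | j) hij
    · exact absurd rfl hij
    · exact hXB j
    · exact (hXB i).symm
    · exact hB fun h => hij (congrArg some h)

/-- Deleting from each block what the earlier entries spoil costs at most half of the block. -/
theorem HasAnticompleteFamily.of_pairwise {l : List ι} {B : ι → Finset V}
    {bad : ι → ι → V → Prop} {c : ℝ} (hc : 0 ≤ c) (hlc : l.length * c ≤ 1 / 2)
    (hT : ∀ p ∈ l, B p ⊆ T) (hs : ∀ p ∈ l, s ≤ #(B p))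
    (hbad : l.Pairwise fun q p => count (B p) (bad q p) ≤ c * #(B p))
    (hB : l.Pairwise fun q p => ∀ x ∈ B q, ∀ y ∈ B p, ¬ bad q p y → x ≠ y ∧ ¬ G.Adj x y) :
    HasAnticompleteFamily G T (s / 2) l.length := by
  refine ⟨Fin l.length, inferInstance, trim l B bad, by simp,
    fun i => (trim_subset i).trans (hT _ (List.getElem_mem _)), fun i => ?_, fun i j hij => ?_⟩
  · have := hs l[i] (List.getElem_mem _)
    linarith [half_card_le_card_trim hc hlc hbad i]
  · have hanti : ∀ i j : Fin l.length, i < j →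
        Anticomplete G (trim l B bad i) (trim l B bad j) := fun i j hij x hx y hy =>
      List.pairwise_iff_getElem.1 hB i j i.2 j.2 hij x (trim_subset i hx) y (trim_subset j hy)
        (not_bad_of_mem_trim hij hy)
    rcases lt_or_gt_of_ne hij with hlt | hgt
    · exact hanti i j hlt
    · exact (hanti j i hgt).symm

end Families

/-! ### The setting and brooms -/

section Brooms

variable {V : Type*} {G : SimpleGraph V} {E X Y F R : Finset V} {n t s : ℝ} {C : ℕ} {v : V}
  {U : V → Prop}

theorem cycleGraph_six_isIndContained {a b c d e f : V} (hab : G.Adj a b) (hbc : G.Adj b c)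
    (hcd : G.Adj c d) (hde : G.Adj d e) (hef : G.Adj e f) (hfa : G.Adj f a) (hac : ¬ G.Adj a c)
    (had : ¬ G.Adj a d) (hae : ¬ G.Adj a e) (hbd : ¬ G.Adj b d) (hbe : ¬ G.Adj b e)
    (hbf : ¬ G.Adj b f) (hce : ¬ G.Adj c e) (hcf : ¬ G.Adj c f) (hdf : ¬ G.Adj d f) :
    cycleGraph 6 ⊴ G := by
  have hadj : ∀ i j : Fin 6,
      G.Adj (![a, b, c, d, e, f] i) (![a, b, c, d, e, f] j) ↔ (cycleGraph 6).Adj i j := by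
    intro i j
    fin_cases i <;> fin_cases j <;>
      first
      | exact iff_of_true (by assumption) (by simp only [cycleGraph_adj]; decide)
      | exact iff_of_true (Adj.symm (by assumption)) (by simp only [cycleGraph_adj]; decide)
      | refine iff_of_false ?_ (by simp only [cycleGraph_adj]; decide)
        first
        | exact G.irrefl
        | assumption
        | exact mt Adj.symm (by assumption)
  have twin_free : ∀ i j : Fin 6,
      (∀ k, (cycleGraph 6).Adj i k ↔ (cycleGraph 6).Adj j k) → i = j := by
    simp only [cycleGraph_adj]
    decide
  refine ⟨⟨⟨![a, b, c, d, e, f], fun i j hij => twin_free i j fun k => ?_⟩, hadj _ _⟩⟩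
  rw [← hadj, ← hadj, hij]

/-- A very sparse hexagon-free set `E` of at most `n` vertices that expands well, in which no large
subset is much sparser and every subset has a large restricted subset. Densities are measured by
powers of the scale `t`. -/
structure Setting (G : SimpleGraph V) (E : Finset V) (n t : ℝ) (C : ℕ) : Prop where
  hexagon_free : ¬ cycleGraph 6 ⊴ G
  scale_pos : 0 < t
  scale_le : t ≤ 1 / 100
  le_exponent : 100 ≤ C
  one_le_pow_mul : 1 ≤ t ^ (32 * C + 619) * n
  degree_le : ∀ x ∈ E, count E (G.Adj x) ≤ t ^ 300 * n
  exists_lt_degree : ∀ F ⊆ E, t ^ 212 * n ≤ #F → ∃ x ∈ F, t ^ 600 * #F < count F (G.Adj x)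
  card_le : #E ≤ n
  expand : ∀ X ⊆ E, t ^ (32 * C + 603) * n ≤ #X →
    t ^ 204 * n ≤ count E fun z => z ∈ X ∨ HasNbrIn G X z
  expand_large : ∀ X ⊆ E, t ^ 832 * n ≤ #X →
    t ^ 2 * n / 2 ≤ count E fun z => z ∈ X ∨ HasNbrIn G X z
  hasRestrictedSubset : ∀ T ⊆ E, HasRestrictedSubset G (t ^ (16 * C)) (t ^ 16) T

namespace Setting

theorem size_pos (h : Setting G E n t C) : 0 < n :=
  pos_of_mul_pos_right (zero_lt_one.trans_le h.one_le_pow_mul) (pow_pos h.scale_pos _).le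

theorem pow_mul_pos (h : Setting G E n t C) (a : ℕ) : 0 < t ^ a * n :=
  mul_pos (pow_pos h.scale_pos a) h.size_pos

theorem pow_mul_le (h : Setting G E n t C) (a b : ℕ) (hab : a < b := by norm_num) :
    t ^ b * n ≤ t ^ a * n / 100 :=
  pow_mul_le_of_lt h.scale_pos h.scale_le h.size_pos.le hab

theorem count_heavy_le (h : Setting G E n t C) {B : Finset V} {a b : ℕ} (hab : a + b = 300)
    (hBE : B ⊆ E) (hB : B.Nonempty) : count E (Heavy G (t ^ a) B) ≤ t ^ b * n :=
  ErdosHajnal.count_heavy_le (pow_pos h.scale_pos _) hB (fun b hb => h.degree_le b (hBE hb))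
    (by rw [← mul_assoc, ← pow_add, hab])

theorem one_le_pow_mul_card (h : Setting G E n t C) (hX : t ^ (32 * C + 603) * n ≤ #X) :
    1 ≤ t ^ 16 * #X := by
  calc 1 ≤ t ^ (32 * C + 619) * n := h.one_le_pow_mul
    _ = t ^ 16 * (t ^ (32 * C + 603) * n) := by ring
    _ ≤ t ^ 16 * #X := mul_le_mul_of_nonneg_left hX (pow_pos h.scale_pos _).le

end Setting

/-- A broom: an edge from `root` to `tip` with further neighbours `leaves` of the tip. -/
structure Broom (V : Type*) where
  root : V
  tip : V
  leaves : Finset V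

/-- The vertices of a broom other than its root. -/
noncomputable def Broom.body (p : Broom V) : Finset V := insert p.tip p.leaves

theorem Broom.tip_mem_body (p : Broom V) : p.tip ∈ p.body := mem_insert_self _ _

theorem Broom.mem_body {p : Broom V} {b : V} (hb : b ∈ p.leaves) : b ∈ p.body :=
  mem_insert_of_mem hb

/-- `p` is an induced broom up to edges among its leaves: it has at least `s` leaves, and its root
sees none of them. -/
structure IsBroom (G : SimpleGraph V) (E : Finset V) (s : ℝ) (p : Broom V) : Prop where
  adj_root : G.Adj p.root p.tip
  body_subset : p.body ⊆ E
  adj_tip : ∀ b ∈ p.leaves, G.Adj p.tip b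
  not_adj_root : ∀ b ∈ p.leaves, ¬ G.Adj p.root b
  le_card : s ≤ #p.leaves

theorem IsBroom.leaves_subset {p : Broom V} (hp : IsBroom G E s p) : p.leaves ⊆ E :=
  (subset_insert _ _).trans hp.body_subset

/-- A vertex of large degree inside `F` is the tip of a broom, since its neighbour in `R` sees too
little of `F` to cover its neighbourhood. -/
theorem Setting.exists_broom (h : Setting G E n t C) (hFE : F ⊆ E) (hF : t ^ 212 * n ≤ #F)
    (hFR : ∀ z ∈ F, HasNbrIn G R z) (hthin : ∀ x ∈ R, count F (G.Adj x) < t ^ 813 * n) :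
    ∃ p, IsBroom G E (t ^ 813 * n) p ∧ p.root ∈ R ∧ p.body ⊆ F := by
  obtain ⟨f, hf, hdeg⟩ := h.exists_lt_degree F hFE hF
  obtain ⟨x, hxR, hxf⟩ := hFR f hf
  have hbody : insert f {z ∈ F | G.Adj f z ∧ ¬ G.Adj x z} ⊆ F :=
    insert_subset hf (filter_subset _ _)
  refine ⟨⟨x, f, {z ∈ F | G.Adj f z ∧ ¬ G.Adj x z}⟩, ⟨hxf, hbody.trans hFE,
    fun b hb => (mem_filter.1 hb).2.1, fun b hb => (mem_filter.1 hb).2.2, ?_⟩, hxR, hbody⟩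
  have hsplit : count F (G.Adj f) ≤
      count F (fun z => G.Adj f z ∧ ¬ G.Adj x z) + count F (G.Adj x) :=
    count_le_add fun z _ hz => by tauto
  have hlarge : t ^ 812 * n ≤ t ^ 600 * #F := by
    calc t ^ 812 * n = t ^ 600 * (t ^ 212 * n) := by ring
      _ ≤ t ^ 600 * #F := mul_le_mul_of_nonneg_left hF (pow_pos h.scale_pos _).le
  rw [coe_card_filter]
  linarith [hthin x hxR, h.pow_mul_le 812 813, h.pow_mul_pos 812]

/-! ### Brooms rooted in an almost complete set -/

/-- A broom whose root lies in `Q` and none of whose other vertices is heavy to `Q`. -/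
structure IsLightBroom (G : SimpleGraph V) (E Q : Finset V) (s t : ℝ) (p : Broom V) : Prop
    extends IsBroom G E s p where
  root_mem : p.root ∈ Q
  not_heavy : ∀ z ∈ p.body, ¬ Heavy G (t ^ 10) Q z

/-- `x` should not be the root of a broom chosen after `o`. -/
def Broom.SpoilsRoot (G : SimpleGraph V) (t : ℝ) (o : Broom V) (x : V) : Prop :=
  ¬ G.Adj o.root x ∨ G.Adj o.tip x ∨ Heavy G (t ^ 5) o.leaves x

/-- `z` should not be a tip or a leaf of a broom chosen after `o`. -/
def Broom.Forbids (G : SimpleGraph V) (t : ℝ) (o : Broom V) (z : V) : Prop :=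
  G.Adj o.root z ∨ G.Adj o.tip z ∨ Heavy G (t ^ 5) o.leaves z

variable {Q : Finset V} {o p q : Broom V}

theorem count_not_adj_le {a : V} {A : Finset V} :
    count A (fun x => ¬ G.Adj a x) ≤ count A (Gᶜ.Adj a) + 1 := by
  have hself : count A (fun x => x = a) ≤ 1 := by
    unfold count
    exact_mod_cast card_le_one.2 fun x hx y hy => by
      rw [(mem_filter.1 hx).2, (mem_filter.1 hy).2]
  have hsplit : count A (fun x => ¬ G.Adj a x) ≤ count A (Gᶜ.Adj a) + count A (fun x => x = a) :=
    count_le_add fun x _ hx => (em (x = a)).symm.imp_left fun hne => ⟨Ne.symm hne, hx⟩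
  linarith

theorem IsLightBroom.count_spoilsRoot_le (ho : IsLightBroom G E Q s t o) (hs : 0 < s) (ht : 0 < t)
    (ht1 : t ≤ 1 / 100) (hQ : Sparse Gᶜ (t ^ 16) Q) (hone : 1 ≤ t ^ 16 * #Q) :
    count Q (o.SpoilsRoot G t) ≤ t / 4 * #Q := by
  have hheavy : count Q (Heavy G (t ^ 5) o.leaves) ≤ t ^ 5 * #Q := by
    refine count_heavy_le (d := t ^ 10 * #Q) (by positivity)
      (nonempty_of_pos_of_le_card hs ho.le_card) (fun b hb => ?_) (le_of_eq (by ring))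
    exact (not_le.1 (ho.not_heavy b (Broom.mem_body hb))).le
  have htip := not_le.1 (ho.not_heavy _ o.tip_mem_body)
  have hroot := hQ _ ho.root_mem
  have : 0 ≤ t ^ 1 * (#Q : ℝ) := by positivity
  unfold Broom.SpoilsRoot
  linarith [count_or_le Q (fun x => ¬ G.Adj o.root x) (fun x => G.Adj o.tip x ∨
      Heavy G (t ^ 5) o.leaves x), count_or_le Q (G.Adj o.tip) (Heavy G (t ^ 5) o.leaves),
    count_not_adj_le (G := G) (a := o.root) (A := Q),
    pow_mul_le_of_lt ht ht1 (Nat.cast_nonneg #Q) (show 1 < 16 by norm_num),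
    pow_mul_le_of_lt ht ht1 (Nat.cast_nonneg #Q) (show 1 < 10 by norm_num),
    pow_mul_le_of_lt ht ht1 (Nat.cast_nonneg #Q) (show 1 < 5 by norm_num)]

theorem IsLightBroom.count_forbids_le (ho : IsLightBroom G E Q s t o) (h : Setting G E n t C)
    (hs : 0 < s) (hQE : Q ⊆ E) : count E (o.Forbids G t) ≤ t ^ 290 * n := by
  have hheavy := h.count_heavy_le (a := 5) (b := 295) rfl ho.leaves_subset
    (nonempty_of_pos_of_le_card hs ho.le_card)
  unfold Broom.Forbids
  linarith [count_or_le E (G.Adj o.root) (fun x => G.Adj o.tip x ∨ Heavy G (t ^ 5) o.leaves x),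
    count_or_le E (G.Adj o.tip) (Heavy G (t ^ 5) o.leaves), h.degree_le _ (hQE ho.root_mem),
    h.degree_le _ (ho.body_subset o.tip_mem_body), h.pow_mul_le 290 300, h.pow_mul_le 290 295,
    h.pow_mul_pos 290]

theorem not_adj_leaves_of_not_spoilsRoot (hG : ¬ cycleGraph 6 ⊴ G) (hp : IsBroom G E s p)
    (hq : IsBroom G E s q) (hroot : ¬ p.SpoilsRoot G t q.root)
    (hbody : ∀ z ∈ q.body, ¬ p.Forbids G t z) {x y : V} (hx : x ∈ q.leaves) (hy : y ∈ p.leaves)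
    (hbad : ¬ (G.Adj q.root y ∨ G.Adj q.tip y)) : x ≠ y ∧ ¬ G.Adj x y := by
  have htip := hbody _ q.tip_mem_body
  have hleaf := hbody x (Broom.mem_body hx)
  simp only [Broom.SpoilsRoot, Broom.Forbids, not_or, not_not] at hroot htip hleaf hbad
  refine ⟨?_, fun hxy => hG <| cycleGraph_six_isIndContained hp.adj_root (hp.adj_tip y hy) hxy.symm
    (hq.adj_tip x hx).symm hq.adj_root.symm hroot.1.symm (hp.not_adj_root y hy) hleaf.1 htip.1
    hleaf.2.1 htip.2.1 hroot.2.1 (mt Adj.symm hbad.2) (mt Adj.symm hbad.1)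
    (mt Adj.symm (hq.not_adj_root x hx))⟩
  rintro rfl
  exact hleaf.2.1 (hp.adj_tip x hy)

theorem Setting.exists_pairwise_brooms (h : Setting G E n t C) (hs : 0 < s) (hQE : Q ⊆ E)
    (hQ : Sparse Gᶜ (t ^ 16) Q) (hone : 1 ≤ t ^ 16 * #Q)
    (hext : ∀ Y ⊆ Q, (#Q : ℝ) / 2 ≤ #Y → ∀ W, count E W ≤ t ^ 205 * n →
      ∃ p, IsBroom G E s p ∧ p.root ∈ Y ∧ ∀ z ∈ p.body, ¬ W z) :
    ∃ l : List (Broom V), l.length = ⌈1 / t⌉₊ ∧ (∀ p ∈ l, IsLightBroom G E Q s t p) ∧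
      l.Pairwise fun q p => ¬ p.SpoilsRoot G t q.root ∧ ∀ z ∈ q.body, ¬ p.Forbids G t z := by
  have hk := ceil_inv_mul_le h.scale_pos h.scale_le
  have hQne : Q.Nonempty := card_pos.1 (Nat.cast_pos.1
    (pos_of_mul_pos_right (zero_lt_one.trans_le hone) (pow_pos h.scale_pos _).le))
  refine exists_pairwise_list_of_extend (E := E) (c := t / 4) (d := t ^ 290 * n)
    (by linarith [h.scale_pos]) (h.pow_mul_pos _).le (by linarith)
    (fun o ho => ho.count_spoilsRoot_le hs h.scale_pos h.scale_le hQ hone) fun Y hYQ hY W hW => ?_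
  have hW' : count E W ≤ 2 * (t ^ 289 * n) := hW.trans <| by
    calc (⌈1 / t⌉₊ : ℝ) * (t ^ 290 * n) = ⌈1 / t⌉₊ * t * (t ^ 289 * n) := by ring
      _ ≤ 2 * (t ^ 289 * n) := mul_le_mul_of_nonneg_right hk (h.pow_mul_pos _).le
  obtain ⟨p, hp, hroot, hbody⟩ := hext Y hYQ hY (fun z => Heavy G (t ^ 10) Q z ∨ W z) <| by
    linarith [count_or_le E (Heavy G (t ^ 10) Q) W, h.pow_mul_le 205 290, h.pow_mul_le 205 289,
      h.count_heavy_le (a := 10) (b := 290) rfl hQE hQne, h.pow_mul_pos 205]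
  have hlight : IsLightBroom G E Q s t p :=
    ⟨hp, hYQ hroot, fun z hz hheavy => hbody z hz (Or.inl hheavy)⟩
  exact ⟨p, hlight, hroot, fun z hz hWz => hbody z hz (Or.inr hWz),
    (count_mono subset_rfl fun _ _ hz => hz.1).trans (hlight.count_forbids_le h hs hQE)⟩

theorem Setting.hasAnticompleteFamily_of_brooms (h : Setting G E n t C) (hs : 0 < s) (hQE : Q ⊆ E)
    (hQ : Sparse Gᶜ (t ^ 16) Q) (hone : 1 ≤ t ^ 16 * #Q)
    (hext : ∀ Y ⊆ Q, (#Q : ℝ) / 2 ≤ #Y → ∀ W, count E W ≤ t ^ 205 * n →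
      ∃ p, IsBroom G E s p ∧ p.root ∈ Y ∧ ∀ z ∈ p.body, ¬ W z) :
    HasAnticompleteFamily G E (s / 2) (1 / t) := by
  obtain ⟨l, hl, hlight, hpair⟩ := h.exists_pairwise_brooms hs hQE hQ hone hext
  have ht := h.scale_pos
  have hlength : l.length * (2 * t ^ 5) ≤ 1 / 2 := by
    calc (l.length : ℝ) * (2 * t ^ 5) = ⌈1 / t⌉₊ * t * (2 * t ^ 4) := by rw [hl]; ring
      _ ≤ 2 * (2 * t ^ 4) :=
        mul_le_mul_of_nonneg_right (ceil_inv_mul_le ht h.scale_le) (by positivity)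
      _ ≤ 1 / 2 := by linarith [pow_le_of_pos ht h.scale_le (show 0 < 4 by norm_num)]
  refine (HasAnticompleteFamily.of_pairwise (B := Broom.leaves)
    (bad := fun q _ y => G.Adj q.root y ∨ G.Adj q.tip y) (by positivity) hlength
    (fun p hp => (hlight p hp).leaves_subset) (fun p hp => (hlight p hp).le_card) ?_ ?_).mono
    subset_rfl le_rfl (hl ▸ Nat.le_ceil _)
  · refine hpair.imp fun {q p} hqp => ?_
    have hroot : count p.leaves (G.Adj q.root) < t ^ 5 * #p.leaves :=
      not_le.1 fun hge => hqp.1 (Or.inr (Or.inr hge))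
    have htip : count p.leaves (G.Adj q.tip) < t ^ 5 * #p.leaves :=
      not_le.1 fun hge => hqp.2 _ q.tip_mem_body (Or.inr (Or.inr hge))
    linarith [count_or_le p.leaves (G.Adj q.root) (G.Adj q.tip)]
  · exact hpair.imp_of_mem fun hq hp hqp x hx y hy => not_adj_leaves_of_not_spoilsRoot
      h.hexagon_free (hlight _ hp).toIsBroom (hlight _ hq).toIsBroom hqp.1 hqp.2 hx hy

end Brooms

/-! ### Trapped neighbours -/

section Trapped

variable {V : Type*} {G : SimpleGraph V} {E X Y : Finset V} {n t s : ℝ} {C : ℕ} {u v : V}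
  {U W Z : V → Prop}

/-- `a` is a neighbour of `v` with fewer than `s` neighbours outside both `W` and the
neighbourhood of `v`. -/
def Trapped (G : SimpleGraph V) (E : Finset V) (s : ℝ) (v : V) (W : V → Prop) (a : V) : Prop :=
  G.Adj v a ∧ count E (fun z => G.Adj a z ∧ ¬ G.Adj v z ∧ ¬ W z) < s

namespace Setting

theorem le_count_hasNbrIn (h : Setting G E n t C) (hv : v ∈ E) (hYE : Y ⊆ E)
    (hvY : ∀ x ∈ Y, G.Adj v x) (hY : t ^ (32 * C + 603) * n ≤ #Y)
    (hZ : count E Z ≤ 2 * (t ^ 205 * n)) :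
    t ^ 212 * n ≤ count E fun z => HasNbrIn G Y z ∧ ¬ G.Adj v z ∧ ¬ Z z := by
  have hsplit : count E (fun z => z ∈ Y ∨ HasNbrIn G Y z) ≤
      count E (fun z => HasNbrIn G Y z ∧ ¬ G.Adj v z ∧ ¬ Z z) +
        count E (fun z => G.Adj v z ∨ Z z) :=
    count_le_add fun z _ hz => by
      have := hvY z
      tauto
  linarith [count_or_le E (G.Adj v) Z, h.expand Y hYE hY, h.degree_le v hv, h.pow_mul_le 204 300,
    h.pow_mul_le 204 205, h.pow_mul_le 204 212, h.pow_mul_pos 204]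

theorem exists_support (h : Setting G E n t C) (hYE : Y ⊆ E)
    (hY : t ^ 212 * n ≤ count E fun z => HasNbrIn G Y z ∧ U z) :
    ∃ R ⊆ Y, t ^ 212 * n ≤ count E (fun z => HasNbrIn G R z ∧ U z) ∧
      count E (fun z => HasNbrIn G R z ∧ U z) ≤ 2 * (t ^ 212 * n) := by
  have hinsert : ∀ R ⊆ Y, ∀ a ∈ Y, count E (fun z => HasNbrIn G (insert a R) z ∧ U z) ≤
      count E (fun z => HasNbrIn G R z ∧ U z) + t ^ 300 * n := fun R _ a ha => by
    refine (count_le_add fun z _ hz => ?_).trans (add_le_add_right (h.degree_le a (hYE ha)) _)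
    obtain ⟨⟨r, hr, hrz⟩, hUz⟩ := hz
    rcases mem_insert.1 hr with rfl | hr
    exacts [Or.inr hrz, Or.inl ⟨⟨r, hr, hrz⟩, hUz⟩]
  obtain ⟨R, hRY, hR, hR'⟩ := exists_subset_between
    (fun R => count E fun z => HasNbrIn G R z ∧ U z)
    (by simpa [HasNbrIn, count] using h.pow_mul_pos 212) Y hinsert hY
  exact ⟨R, hRY, hR, by linarith [h.pow_mul_le 212 300, h.pow_mul_pos 212]⟩

/-- Supporting the broom on a set `R` whose neighbourhood is barely large enough to contain it
keeps the part of the graph blocked by `R` small. -/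
theorem exists_broom_of_trapped (h : Setting G E n t C) (hv : v ∈ E) (hYE : Y ⊆ E)
    (hY : ∀ x ∈ Y, Trapped G E (t ^ 813 * n) v W x) (hYc : t ^ (32 * C + 603) * n ≤ #Y)
    (hWZ : ∀ z, W z → Z z) (hZ : count E Z ≤ 2 * (t ^ 205 * n)) :
    ∃ p, IsBroom G E (t ^ 813 * n) p ∧ ∃ R ⊆ Y, p.root ∈ R ∧
      (∀ z ∈ p.body, HasNbrIn G R z ∧ ¬ G.Adj v z ∧ ¬ Z z) ∧
      count E (fun z => HasNbrIn G R z ∧ ¬ G.Adj v z ∧ ¬ Z z) ≤ 2 * (t ^ 212 * n) := by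
  obtain ⟨R, hRY, hR, hR'⟩ := h.exists_support hYE <|
    h.le_count_hasNbrIn hv hYE (fun x hx => (hY x hx).1) hYc hZ
  rw [← coe_card_filter] at hR
  have hthin : ∀ x ∈ R, count {z ∈ E | HasNbrIn G R z ∧ ¬ G.Adj v z ∧ ¬ Z z} (G.Adj x) <
      t ^ 813 * n := fun x hx => by
    refine (count_mono (filter_subset _ _) fun z hz hxz => ?_).trans_lt (hY x (hRY hx)).2
    have hz := (mem_filter.1 hz).2.2
    exact ⟨hxz, hz.1, fun hWz => hz.2 (hWZ z hWz)⟩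
  obtain ⟨p, hp, hroot, hbody⟩ := h.exists_broom (filter_subset _ _) hR
    (fun z hz => (mem_filter.1 hz).2.1) hthin
  exact ⟨p, hp, R, hRY, hroot, fun z hz => (mem_filter.1 (hbody hz)).2, hR'⟩

theorem hasAnticompleteFamily_of_trapped_dense (h : Setting G E n t C) (hv : v ∈ E)
    (hW : count E W ≤ t ^ 205 * n) (hXE : X ⊆ E)
    (hX : ∀ a ∈ X, Trapped G E (t ^ 813 * n) v W a)
    (hXc : 2 * (t ^ (32 * C + 603) * n) ≤ #X) (hXd : Sparse Gᶜ (t ^ 16) X) :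
    HasAnticompleteFamily G E (t ^ 813 * n / 2) (1 / t) := by
  have hpos := h.pow_mul_pos (32 * C + 603)
  refine h.hasAnticompleteFamily_of_brooms (h.pow_mul_pos _) hXE hXd
    (h.one_le_pow_mul_card (by linarith)) fun Y hYX hY W' hW' => ?_
  obtain ⟨p, hp, R, hRY, hroot, hbody, -⟩ := h.exists_broom_of_trapped hv (hYX.trans hXE)
    (fun x hx => hX x (hYX hx)) (by linarith) (Z := fun z => W z ∨ W' z) (fun _ => Or.inl)
    (by linarith [count_or_le E W W'])
  exact ⟨p, hp, hRY hroot, fun z hz hW'z => (hbody z hz).2.2 (Or.inr hW'z)⟩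

end Setting

/-- A broom together with a set `support` containing its root, in which each leaf `b` has a
neighbour `parent b`. -/
structure SupportedBroom (V : Type*) extends Broom V where
  support : Finset V
  parent : V → V

/-- `p` is a broom supported in `X` whose tip and leaves satisfy `U`. -/
structure IsSupportedBroom (G : SimpleGraph V) (E X : Finset V) (U : V → Prop) (s : ℝ)
    (p : SupportedBroom V) : Prop extends IsBroom G E s p.toBroom where
  support_subset : p.support ⊆ X
  root_mem : p.root ∈ p.support
  of_mem_body : ∀ z ∈ p.body, U z
  parent_mem : ∀ b ∈ p.leaves, p.parent b ∈ p.support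
  adj_parent : ∀ b ∈ p.leaves, G.Adj (p.parent b) b

/-- `x` should not be the root of a supported broom chosen after `o`. -/
def SupportedBroom.SpoilsRoot (G : SimpleGraph V) (t : ℝ) (o : SupportedBroom V) (x : V) : Prop :=
  Heavy G (t ^ 5) o.leaves x ∨ t ^ 5 * #o.leaves ≤ count o.leaves fun b => G.Adj (o.parent b) x

/-- `z` should not be a tip or a leaf of a supported broom chosen after `o`. -/
def SupportedBroom.Forbids (G : SimpleGraph V) (t : ℝ) (U : V → Prop) (o : SupportedBroom V)
    (z : V) : Prop :=
  (U z ∧ HasNbrIn G o.support z) ∨ Heavy G (t ^ 5) o.leaves z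

variable {o p q : SupportedBroom V}

theorem IsSupportedBroom.count_spoilsRoot_le (ho : IsSupportedBroom G E X U s o) (hs : 0 < s)
    (ht : 0 < t) (ht1 : t ≤ 1 / 100) (hX : Sparse G (t ^ 16) X)
    (hU : ∀ z, U z → ¬ Heavy G (t ^ 10) X z) :
    count X (o.SpoilsRoot G t) ≤ t / 4 * #X := by
  have hleaves := nonempty_of_pos_of_le_card hs ho.le_card
  have hheavy : count X (Heavy G (t ^ 5) o.leaves) ≤ t ^ 5 * #X := by
    refine count_heavy_le (d := t ^ 10 * #X) (by positivity) hleaves (fun b hb => ?_)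
      (le_of_eq (by ring))
    exact (not_le.1 (hU b (ho.of_mem_body b (Broom.mem_body hb)))).le
  have hparent : count X (fun x => t ^ 5 * #o.leaves ≤
      count o.leaves fun b => G.Adj (o.parent b) x) ≤ t ^ 11 * #X :=
    count_le_of_forall_count_le (d := t ^ 16 * #X) (by positivity) hleaves
      (fun b hb => hX _ (ho.support_subset (ho.parent_mem b hb))) (le_of_eq (by ring))
  have hpos : 0 ≤ t ^ 1 * (#X : ℝ) := by positivity
  unfold SupportedBroom.SpoilsRoot
  linarith [count_or_le X (Heavy G (t ^ 5) o.leaves) fun x => t ^ 5 * #o.leaves ≤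
      count o.leaves fun b => G.Adj (o.parent b) x,
    pow_mul_le_of_lt ht ht1 (Nat.cast_nonneg #X) (show 1 < 5 by norm_num),
    pow_mul_le_of_lt ht ht1 (Nat.cast_nonneg #X) (show 1 < 11 by norm_num)]

/-- The hexagon in question is `v`, the root and tip of the later broom, a leaf `x` of it, a leaf
`y` of the earlier broom, and the parent of `y`. -/
theorem not_adj_leaves_of_not_forbids (hG : ¬ cycleGraph 6 ⊴ G)
    (hp : IsSupportedBroom G E X U s p) (hq : IsSupportedBroom G E X U s q)
    (hvX : ∀ x ∈ X, G.Adj v x) (hvU : ∀ z, U z → ¬ G.Adj v z)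
    (hbody : ∀ z ∈ q.body, ¬ p.Forbids G t U z) {x y : V} (hx : x ∈ q.leaves) (hy : y ∈ p.leaves)
    (hbad : ¬ (G.Adj q.root y ∨ G.Adj q.tip y ∨ G.Adj (p.parent y) q.root)) :
    x ≠ y ∧ ¬ G.Adj x y := by
  have hfar : ∀ z ∈ q.body, ¬ G.Adj (p.parent y) z := fun z hz hyz =>
    hbody z hz (Or.inl ⟨hq.of_mem_body z hz, p.parent y, hp.parent_mem y hy, hyz⟩)
  have hv : ∀ z ∈ q.body, ¬ G.Adj v z := fun z hz => hvU z (hq.of_mem_body z hz)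
  simp only [not_or] at hbad
  refine ⟨?_, fun hxy => hG <| cycleGraph_six_isIndContained
    (hvX _ (hq.support_subset hq.root_mem)) hq.adj_root (hq.adj_tip x hx) hxy
    (hp.adj_parent y hy).symm (hvX _ (hp.support_subset (hp.parent_mem y hy))).symm
    (hv _ q.tip_mem_body) (hv x (Broom.mem_body hx))
    (hvU y (hp.of_mem_body y (Broom.mem_body hy))) (hq.not_adj_root x hx) hbad.1
    (mt Adj.symm hbad.2.2) hbad.2.1 (mt Adj.symm (hfar _ q.tip_mem_body))
    (mt Adj.symm (hfar x (Broom.mem_body hx)))⟩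
  rintro rfl
  exact hfar x (Broom.mem_body hx) (hp.adj_parent x hy)

namespace Setting

theorem exists_supportedBroom (h : Setting G E n t C) (hv : v ∈ E)
    (hW : count E W ≤ t ^ 205 * n) (hXE : X ⊆ E) (hYX : Y ⊆ X)
    (hY : ∀ a ∈ Y, Trapped G E (t ^ 813 * n) v W a)
    (hYc : t ^ (32 * C + 603) * n ≤ #Y) (hZ : count E Z ≤ 6 * (t ^ 211 * n))
    (hU : ∀ z, U z ↔ ¬ G.Adj v z ∧ ¬ W z ∧ ¬ Heavy G (t ^ 10) X z) :
    ∃ p, IsSupportedBroom G E X U (t ^ 813 * n) p ∧ p.root ∈ Y ∧ (∀ z ∈ p.body, ¬ Z z) ∧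
      count E (fun z => p.Forbids G t U z ∧ ¬ Z z) ≤ 3 * (t ^ 212 * n) := by
  have hXne : X.Nonempty := (nonempty_of_pos_of_le_card (h.pow_mul_pos _) hYc).mono hYX
  obtain ⟨p, hp, R, hRY, hroot, hbody, hR⟩ := h.exists_broom_of_trapped hv (hYX.trans hXE) hY hYc
    (Z := fun z => W z ∨ Heavy G (t ^ 10) X z ∨ Z z) (fun _ => Or.inl) <| by
      linarith [count_or_le E W fun z => Heavy G (t ^ 10) X z ∨ Z z,
        count_or_le E (Heavy G (t ^ 10) X) Z, h.pow_mul_le 205 290, h.pow_mul_le 205 211,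
        h.count_heavy_le (a := 10) (b := 290) rfl hXE hXne, h.pow_mul_pos 205]
  have hparent : ∀ b, ∃ r, b ∈ p.leaves → r ∈ R ∧ G.Adj r b := fun b => by
    by_cases hb : b ∈ p.leaves
    · obtain ⟨r, hr⟩ := (hbody b (Broom.mem_body hb)).1
      exact ⟨r, fun _ => hr⟩
    · exact ⟨b, fun hb' => absurd hb' hb⟩
  choose parent hparent using hparent
  refine ⟨⟨p, R, parent⟩, ⟨hp, hRY.trans hYX, hroot, fun z hz => ?_, fun b hb => (hparent b hb).1,
    fun b hb => (hparent b hb).2⟩, hRY hroot, fun z hz hZz => ?_, ?_⟩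
  · have := (hbody z hz).2
    rw [hU]
    tauto
  · exact (hbody z hz).2.2 (Or.inr (Or.inr hZz))
  · have hsplit : count E (fun z => SupportedBroom.Forbids G t U ⟨p, R, parent⟩ z ∧ ¬ Z z) ≤
        count E (fun z => HasNbrIn G R z ∧ ¬ G.Adj v z ∧
          ¬ (W z ∨ Heavy G (t ^ 10) X z ∨ Z z)) + count E (Heavy G (t ^ 5) p.leaves) :=
      count_le_add fun z _ hz => by
        simp only [SupportedBroom.Forbids, hU] at hz
        tauto
    linarith [h.pow_mul_le 212 295, h.pow_mul_pos 212, h.count_heavy_le (a := 5) (b := 295) rfl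
      hp.leaves_subset (nonempty_of_pos_of_le_card (h.pow_mul_pos _) hp.le_card)]

theorem exists_pairwise_supportedBrooms (h : Setting G E n t C) (hv : v ∈ E)
    (hW : count E W ≤ t ^ 205 * n) (hXE : X ⊆ E)
    (hX : ∀ a ∈ X, Trapped G E (t ^ 813 * n) v W a)
    (hXc : 2 * (t ^ (32 * C + 603) * n) ≤ #X) (hXs : Sparse G (t ^ 16) X)
    (hU : ∀ z, U z ↔ ¬ G.Adj v z ∧ ¬ W z ∧ ¬ Heavy G (t ^ 10) X z) :
    ∃ l : List (SupportedBroom V), l.length = ⌈1 / t⌉₊ ∧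
      (∀ p ∈ l, IsSupportedBroom G E X U (t ^ 813 * n) p) ∧
      l.Pairwise fun q p => ¬ p.SpoilsRoot G t q.root ∧ ∀ z ∈ q.body, ¬ p.Forbids G t U z := by
  have hk := ceil_inv_mul_le h.scale_pos h.scale_le
  refine exists_pairwise_list_of_extend (E := E) (c := t / 4) (d := 3 * (t ^ 212 * n))
    (by linarith [h.scale_pos]) (by linarith [h.pow_mul_pos 212]) (by linarith)
    (fun o ho => ho.count_spoilsRoot_le (h.pow_mul_pos _) h.scale_pos h.scale_le hXs
      fun z hz => ((hU z).1 hz).2.2) fun Y hYX hY Z hZ => ?_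
  refine h.exists_supportedBroom hv hW hXE hYX (fun a ha => hX a (hYX ha)) (by linarith) ?_ hU
  calc count E Z ≤ ⌈1 / t⌉₊ * (3 * (t ^ 212 * n)) := hZ
    _ = ⌈1 / t⌉₊ * t * (3 * (t ^ 211 * n)) := by ring
    _ ≤ 2 * (3 * (t ^ 211 * n)) :=
      mul_le_mul_of_nonneg_right hk (by linarith [h.pow_mul_pos 211])
    _ = 6 * (t ^ 211 * n) := by ring

theorem hasAnticompleteFamily_of_trapped_sparse (h : Setting G E n t C) (hv : v ∈ E)
    (hW : count E W ≤ t ^ 205 * n) (hXE : X ⊆ E)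
    (hX : ∀ a ∈ X, Trapped G E (t ^ 813 * n) v W a)
    (hXc : 2 * (t ^ (32 * C + 603) * n) ≤ #X) (hXs : Sparse G (t ^ 16) X) :
    HasAnticompleteFamily G E (t ^ 813 * n / 2) (1 / t) := by
  obtain ⟨l, hl, hgood, hpair⟩ := h.exists_pairwise_supportedBrooms hv hW hXE hX hXc hXs
    fun _ => Iff.rfl
  have ht := h.scale_pos
  have hlength : l.length * (3 * t ^ 5) ≤ 1 / 2 := by
    calc (l.length : ℝ) * (3 * t ^ 5) = ⌈1 / t⌉₊ * t * (3 * t ^ 4) := by rw [hl]; ring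
      _ ≤ 2 * (3 * t ^ 4) :=
        mul_le_mul_of_nonneg_right (ceil_inv_mul_le ht h.scale_le) (by positivity)
      _ ≤ 1 / 2 := by linarith [pow_le_of_pos ht h.scale_le (show 0 < 4 by norm_num)]
  refine (HasAnticompleteFamily.of_pairwise (B := fun p : SupportedBroom V => p.leaves)
    (bad := fun q p y => G.Adj q.root y ∨ G.Adj q.tip y ∨ G.Adj (p.parent y) q.root)
    (by positivity) hlength (fun p hp => (hgood p hp).leaves_subset)
    (fun p hp => (hgood p hp).le_card) ?_ ?_).mono subset_rfl le_rfl (hl ▸ Nat.le_ceil _)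
  · refine hpair.imp fun {q p} hqp => ?_
    have hroot : count p.leaves (G.Adj q.root) < t ^ 5 * #p.leaves :=
      not_le.1 fun hge => hqp.1 (Or.inl hge)
    have htip : count p.leaves (G.Adj q.tip) < t ^ 5 * #p.leaves :=
      not_le.1 fun hge => hqp.2 _ q.tip_mem_body (Or.inr hge)
    have hparent := not_le.1 fun hge => hqp.1 (Or.inr hge)
    linarith [count_or_le p.leaves (G.Adj q.root) fun y => G.Adj q.tip y ∨
        G.Adj (p.parent y) q.root,
      count_or_le p.leaves (G.Adj q.tip) fun y => G.Adj (p.parent y) q.root]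
  · exact hpair.imp_of_mem fun hq hp hqp x hx y hy => not_adj_leaves_of_not_forbids
      h.hexagon_free (hgood _ hp) (hgood _ hq) (fun x hx => (hX x hx).1) (fun z hz => hz.1)
      hqp.2 hx hy

end Setting

/-- No vertex has many trapped neighbours, even after deleting a small set `W`. -/
def FewTrapped (G : SimpleGraph V) (E : Finset V) (n t : ℝ) (C : ℕ) : Prop :=
  ∀ v ∈ E, ∀ W : V → Prop, count E W ≤ t ^ 205 * n →
    count E (Trapped G E (t ^ 813 * n) v W) < t ^ (16 * C + 602) * n

theorem FewTrapped.exists_mem (hF : FewTrapped G E n t C) (hv : v ∈ E)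
    (hW : count E W ≤ t ^ 205 * n) (hXE : X ⊆ E) (hX : ∀ a ∈ X, G.Adj v a)
    (hXc : t ^ (16 * C + 602) * n ≤ #X) :
    ∃ a ∈ X, t ^ 813 * n ≤ count E fun z => G.Adj a z ∧ ¬ G.Adj v z ∧ ¬ W z := by
  by_contra! htrapped
  refine (hF v hv W hW).not_ge (hXc.trans ?_)
  refine Nat.cast_le.2 (card_le_card fun a ha => ?_)
  exact mem_filter.2 ⟨hXE ha, hX a ha, htrapped a ha⟩

theorem Setting.hasAnticompleteFamily_of_fewTrapped_dense (h : Setting G E n t C)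
    (hF : FewTrapped G E n t C) (hu : u ∈ E) (hXE : X ⊆ E) (hX : ∀ q ∈ X, G.Adj u q)
    (hXc : 2 * (t ^ (16 * C + 602) * n) ≤ #X) (hXd : Sparse Gᶜ (t ^ 16) X) :
    HasAnticompleteFamily G E (t ^ 813 * n / 2) (1 / t) := by
  have hC := h.le_exponent
  refine h.hasAnticompleteFamily_of_brooms (h.pow_mul_pos _) hXE hXd (h.one_le_pow_mul_card ?_)
    fun Y hYX hY W hW => ?_
  · linarith [h.pow_mul_le (16 * C + 602) (32 * C + 603) (by omega),
      h.pow_mul_pos (16 * C + 602)]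
  obtain ⟨q, hq, hq'⟩ := hF.exists_mem hu hW (hYX.trans hXE) (fun a ha => hX a (hYX ha))
    (by linarith)
  rw [← coe_card_filter] at hq'
  obtain ⟨f, hf, hf'⟩ := hF.exists_mem (hXE (hYX hq)) hW (filter_subset _ _)
    (fun a ha => (mem_filter.1 ha).2.1) (le_trans (by
      linarith [h.pow_mul_le 813 (16 * C + 602) (by omega), h.pow_mul_pos 813]) hq')
  rw [← coe_card_filter] at hf'
  obtain ⟨hfE, hqf, -, hWf⟩ := mem_filter.1 hf
  refine ⟨⟨q, f, {z ∈ E | G.Adj f z ∧ ¬ G.Adj q z ∧ ¬ W z}⟩, ⟨hqf,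
    insert_subset hfE (filter_subset _ _), fun b hb => (mem_filter.1 hb).2.1,
    fun b hb => (mem_filter.1 hb).2.2.1, hf'⟩, hq, fun z hz => ?_⟩
  rcases mem_insert.1 hz with rfl | hz
  exacts [hWf, (mem_filter.1 hz).2.2.2]

end Trapped

/-! ### Systems of stars -/

section Stars

variable {V : Type*} {G : SimpleGraph V} {E X : Finset V} {n t s : ℝ} {C : ℕ} {v : V}

/-- A star, given by its center and its leaves. -/
structure Star (V : Type*) where
  center : V
  leaves : Finset V

/-- `p` is a star centered in `X` with at least `s` leaves in `E`, none of which is adjacent to `v`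
or heavy to `X`. -/
structure IsStar (G : SimpleGraph V) (E X : Finset V) (v : V) (s t : ℝ) (p : Star V) : Prop where
  center_mem : p.center ∈ X
  leaves_subset : p.leaves ⊆ E
  adj_center : ∀ b ∈ p.leaves, G.Adj p.center b
  not_adj : ∀ b ∈ p.leaves, ¬ G.Adj v b
  not_heavy : ∀ b ∈ p.leaves, ¬ Heavy G (t ^ 10) X b
  le_card : s ≤ #p.leaves

/-- `x` should not be the center of a star chosen after `o`. -/
def Star.SpoilsCenter (G : SimpleGraph V) (t : ℝ) (o : Star V) (x : V) : Prop :=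
  G.Adj o.center x ∨ Heavy G (t ^ 5) o.leaves x

/-- `z` should not be a leaf of a star chosen after `o`. -/
def Star.Forbids (G : SimpleGraph V) (t : ℝ) (o : Star V) (z : V) : Prop :=
  G.Adj o.center z ∨ Heavy G (t ^ 50) o.leaves z

/-- Stars with nonadjacent centers `a i` in the neighbourhood of `v` and leaf sets `B i` outside
it, in which the center and the leaves of a star see few leaves of the other stars. -/
structure StarSystem {ι : Type*} (G : SimpleGraph V) (E : Finset V) (n t : ℝ) (v : V)
    (a : ι → V) (B : ι → Finset V) : Prop where
  center_mem : ∀ i, a i ∈ E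
  adj_center : ∀ i, G.Adj v (a i)
  leaves_subset : ∀ i, B i ⊆ E
  adj_leaf : ∀ i, ∀ x ∈ B i, G.Adj (a i) x
  not_adj_leaf : ∀ i, ∀ x ∈ B i, ¬ G.Adj v x
  le_card : ∀ i, t ^ 813 * n / 2 ≤ #(B i)
  not_adj_center : ∀ i j, i ≠ j → ¬ G.Adj (a i) (a j)
  not_adj_cross : ∀ i j, i ≠ j → ∀ x ∈ B j, ¬ G.Adj (a i) x
  not_heavy_cross : ∀ i j, i ≠ j → ∀ x ∈ B j, ¬ Heavy G (t ^ 24) (B i) x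

theorem IsStar.count_spoilsCenter_le {o : Star V} (ho : IsStar G E X v s t o) (hs : 0 < s)
    (ht : 0 < t) (ht1 : t ≤ 1 / 100) (hX : Sparse G (t ^ 16) X) :
    count X (o.SpoilsCenter G t) ≤ 2 * t ^ 5 * #X := by
  have hheavy : count X (Heavy G (t ^ 5) o.leaves) ≤ t ^ 5 * #X :=
    count_heavy_le (d := t ^ 10 * #X) (by positivity) (nonempty_of_pos_of_le_card hs ho.le_card)
      (fun b hb => (not_le.1 (ho.not_heavy b hb)).le) (le_of_eq (by ring))
  have hpos : 0 ≤ t ^ 5 * (#X : ℝ) := by positivity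
  unfold Star.SpoilsCenter
  linarith [count_or_le X (G.Adj o.center) (Heavy G (t ^ 5) o.leaves), hX _ ho.center_mem,
    pow_mul_le_of_lt ht ht1 (Nat.cast_nonneg #X) (show 5 < 16 by norm_num)]

theorem IsStar.count_forbids_le {o : Star V} (ho : IsStar G E X v s t o) (h : Setting G E n t C)
    (hs : 0 < s) (hXE : X ⊆ E) : count E (o.Forbids G t) ≤ 2 * (t ^ 250 * n) := by
  unfold Star.Forbids
  linarith [count_or_le E (G.Adj o.center) (Heavy G (t ^ 50) o.leaves),
    h.degree_le _ (hXE ho.center_mem), h.pow_mul_le 250 300, h.pow_mul_pos 250,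
    h.count_heavy_le (a := 50) (b := 250) rfl ho.leaves_subset
      (nonempty_of_pos_of_le_card hs ho.le_card)]

theorem FewTrapped.exists_pairwise_stars (hF : FewTrapped G E n t C) (h : Setting G E n t C)
    (hv : v ∈ E) (hXE : X ⊆ E) (hX : ∀ a ∈ X, G.Adj v a)
    (hXc : 2 * (t ^ (16 * C + 602) * n) ≤ #X) (hXs : Sparse G (t ^ 16) X) {k : ℕ}
    (hk : k * t ^ 4 ≤ 2) :
    ∃ l : List (Star V), l.length = k ∧ (∀ p ∈ l, IsStar G E X v (t ^ 813 * n) t p) ∧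
      l.Pairwise fun q p => ¬ p.SpoilsCenter G t q.center ∧ ∀ z ∈ q.leaves, ¬ p.Forbids G t z := by
  have ht := h.scale_pos
  have hXne : X.Nonempty := nonempty_of_pos_of_le_card
    (by linarith [h.pow_mul_pos (16 * C + 602)]) hXc
  have hspoil : k * (2 * t ^ 5) ≤ 1 / 2 := by
    calc k * (2 * t ^ 5) = k * t ^ 4 * (2 * t) := by ring
      _ ≤ 2 * (2 * t) := mul_le_mul_of_nonneg_right hk (by positivity)
      _ ≤ 1 / 2 := by linarith [h.scale_le]
  refine exists_pairwise_list_of_extend (E := E) (d := 2 * (t ^ 250 * n)) (by positivity)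
    (by linarith [h.pow_mul_pos 250]) hspoil
    (fun o ho => ho.count_spoilsCenter_le (h.pow_mul_pos _) ht h.scale_le hXs)
    fun Y hYX hY W hW => ?_
  have hW' : count E W ≤ 2 * (2 * (t ^ 246 * n)) := hW.trans <| by
    calc k * (2 * (t ^ 250 * n)) = k * t ^ 4 * (2 * (t ^ 246 * n)) := by ring
      _ ≤ 2 * (2 * (t ^ 246 * n)) :=
        mul_le_mul_of_nonneg_right hk (by linarith [h.pow_mul_pos 246])
  obtain ⟨a, ha, hsize⟩ := hF.exists_mem hv (W := fun z => Heavy G (t ^ 10) X z ∨ W z)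
    (by linarith [count_or_le E (Heavy G (t ^ 10) X) W, h.pow_mul_le 205 290,
      h.pow_mul_le 205 246, h.pow_mul_pos 205, h.count_heavy_le (a := 10) (b := 290) rfl hXE hXne])
    (hYX.trans hXE) (fun a ha => hX a (hYX ha)) (by linarith)
  rw [← coe_card_filter] at hsize
  have hstar : IsStar G E X v (t ^ 813 * n) t
      ⟨a, {z ∈ E | G.Adj a z ∧ ¬ G.Adj v z ∧ ¬ (Heavy G (t ^ 10) X z ∨ W z)}⟩ :=
    ⟨hYX ha, filter_subset _ _, fun b hb => (mem_filter.1 hb).2.1,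
      fun b hb => (mem_filter.1 hb).2.2.1,
      fun b hb hheavy => (mem_filter.1 hb).2.2.2 (Or.inl hheavy), hsize⟩
  exact ⟨_, hstar, ha, fun z hz hWz => (mem_filter.1 hz).2.2.2 (Or.inr hWz),
    (count_mono subset_rfl fun _ _ hz => hz.1).trans
      (hstar.count_forbids_le h (h.pow_mul_pos _) hXE)⟩

theorem IsStar.count_adj_or_heavy_le {q p : Star V} (hq : IsStar G E X v s t q) (hs : 0 < s)
    (ht : 0 < t) (ht1 : t ≤ 1 / 100) (hcenter : ¬ p.SpoilsCenter G t q.center)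
    (hleaves : ∀ z ∈ q.leaves, ¬ p.Forbids G t z) :
    count p.leaves (fun y => G.Adj q.center y ∨ Heavy G (t ^ 25) q.leaves y) ≤
      2 * t ^ 5 * #p.leaves := by
  have hadj : count p.leaves (G.Adj q.center) < t ^ 5 * #p.leaves :=
    not_le.1 fun hge => hcenter (Or.inr hge)
  have hheavy : count p.leaves (Heavy G (t ^ 25) q.leaves) ≤ t ^ 25 * #p.leaves :=
    count_heavy_le (d := t ^ 50 * #p.leaves) (by positivity)
      (nonempty_of_pos_of_le_card hs hq.le_card)
      (fun b hb => (not_le.1 fun hge => hleaves b hb (Or.inr hge)).le) (le_of_eq (by ring))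
  have hpos : 0 ≤ t ^ 5 * (#p.leaves : ℝ) := by positivity
  linarith [count_or_le p.leaves (G.Adj q.center) (Heavy G (t ^ 25) q.leaves),
    pow_mul_le_of_lt ht ht1 (Nat.cast_nonneg #p.leaves) (show 5 < 25 by norm_num)]

theorem not_heavy_of_subset_of_half_le {A B : Finset V} {z : V} (ht : 0 < t) (ht1 : t ≤ 1 / 100)
    (hBA : B ⊆ A) (hB : (#A : ℝ) / 2 ≤ #B) (hz : ¬ Heavy G (t ^ 25) A z) :
    ¬ Heavy G (t ^ 24) B z := by
  intro hge
  have hlt := not_le.1 hz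
  have hmono : count B (G.Adj z) ≤ count A (G.Adj z) := count_mono hBA fun _ _ h => h
  have hhalf : t ^ 24 * ((#A : ℝ) / 2) ≤ t ^ 24 * #B := by gcongr
  have hpos : 0 ≤ t ^ 24 * (#A : ℝ) := by positivity
  unfold Heavy at hge
  linarith [pow_mul_le_of_lt ht ht1 (Nat.cast_nonneg #A) (show 24 < 25 by norm_num)]

theorem FewTrapped.exists_starSystem (hF : FewTrapped G E n t C) (h : Setting G E n t C)
    (hv : v ∈ E) (hXE : X ⊆ E) (hX : ∀ a ∈ X, G.Adj v a)
    (hXc : 2 * (t ^ (16 * C + 602) * n) ≤ #X) (hXs : Sparse G (t ^ 16) X) {k : ℕ}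
    (hk : k * t ^ 4 ≤ 2) :
    ∃ (a : Fin k → V) (B : Fin k → Finset V), StarSystem G E n t v a B := by
  obtain ⟨l, rfl, hstar, hpair⟩ := hF.exists_pairwise_stars h hv hXE hX hXc hXs hk
  have ht := h.scale_pos
  have hget : ∀ i : Fin l.length, IsStar G E X v (t ^ 813 * n) t l[i] := fun i =>
    hstar _ (List.getElem_mem _)
  have hlt : ∀ i j : Fin l.length, i < j → ¬ l[j].SpoilsCenter G t l[i].center ∧
      ∀ z ∈ l[i].leaves, ¬ l[j].Forbids G t z := fun i j hij =>
    List.pairwise_iff_getElem.1 hpair i j i.2 j.2 hij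
  let bad (q _ : Star V) (y : V) : Prop := G.Adj q.center y ∨ Heavy G (t ^ 25) q.leaves y
  have hhalf := half_card_le_card_trim (l := l) (B := Star.leaves) (bad := bad) (c := 2 * t ^ 5)
    (by positivity) (by nlinarith [h.scale_le]) <|
      hpair.imp_of_mem fun hq _ hqp =>
        (hstar _ hq).count_adj_or_heavy_le (h.pow_mul_pos _) ht h.scale_le hqp.1 hqp.2
  have hcross : ∀ i j : Fin l.length, i ≠ j → ∀ x ∈ trim l Star.leaves bad j,
      ¬ G.Adj l[i].center x ∧ ¬ Heavy G (t ^ 25) l[i].leaves x := fun i j hij x hx => by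
    rcases lt_or_gt_of_ne hij with hij | hij
    · exact not_or.1 (not_bad_of_mem_trim hij hx)
    · have hforbid := not_or.1 ((hlt j i hij).2 x (trim_subset j hx))
      refine ⟨hforbid.1, fun hge => hforbid.2 (le_trans ?_ hge)⟩
      exact mul_le_mul_of_nonneg_right
        (pow_le_pow_of_le_one ht.le (by linarith [h.scale_le]) (by norm_num)) (Nat.cast_nonneg _)
  refine ⟨fun i => l[i].center, trim l Star.leaves bad, fun i => hXE (hget i).center_mem,
    fun i => hX _ (hget i).center_mem, fun i => (trim_subset i).trans (hget i).leaves_subset,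
    fun i x hx => (hget i).adj_center x (trim_subset i hx),
    fun i x hx => (hget i).not_adj x (trim_subset i hx),
    fun i => by linarith [hhalf i, (hget i).le_card], fun i j hij hadj => ?_,
    fun i j hij x hx => (hcross i j hij x hx).1,
    fun i j hij x hx => not_heavy_of_subset_of_half_le ht h.scale_le (trim_subset i) (hhalf i)
      (hcross i j hij x hx).2⟩
  rcases lt_or_gt_of_ne hij with hij | hij
  · exact (hlt i j hij).1 (Or.inl hadj.symm)
  · exact (hlt j i hij).1 (Or.inl hadj)

/-- The vertices of `B` with at least `t ^ 18 * |B|` non-neighbours in `B`. -/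
noncomputable def loose (G : SimpleGraph V) (t : ℝ) (B : Finset V) : Finset V :=
  {b ∈ B | t ^ 18 * #B ≤ count B fun z => ¬ G.Adj b z}

theorem sparse_compl_filter_notMem_loose {B : Finset V} (ht : 0 < t) (ht1 : t ≤ 1 / 100)
    (hB : (#B : ℝ) / 2 ≤ #{b ∈ B | b ∉ loose G t B}) :
    Sparse Gᶜ (t ^ 16) {b ∈ B | b ∉ loose G t B} := by
  intro x hx
  obtain ⟨hxB, hx⟩ := mem_filter.1 hx
  have hfew : count B (fun z => ¬ G.Adj x z) < t ^ 18 * #B :=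
    not_le.1 fun hge => hx (mem_filter.2 ⟨hxB, hge⟩)
  have hmono : count {b ∈ B | b ∉ loose G t B} (Gᶜ.Adj x) ≤ count B fun z => ¬ G.Adj x z :=
    count_mono (filter_subset _ _) fun z _ hz => ((compl_adj _ _ _).1 hz).2
  have hhalf := mul_le_mul_of_nonneg_left hB (pow_pos ht 16).le
  have hpos : 0 ≤ t ^ 16 * (#B : ℝ) := by positivity
  linarith [pow_mul_le_of_lt ht ht1 (Nat.cast_nonneg #B) (show 16 < 18 by norm_num)]

namespace StarSystem

variable {ι : Type} {a : ι → V} {B : ι → Finset V} {c : V}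

theorem restrict (hS : StarSystem G E n t v a B) (J : ι → Prop) :
    StarSystem G E n t v (fun j : {j // J j} => a j) (fun j : {j // J j} => B j) where
  center_mem i := hS.center_mem i
  adj_center i := hS.adj_center i
  leaves_subset i := hS.leaves_subset i
  adj_leaf i := hS.adj_leaf i
  not_adj_leaf i := hS.not_adj_leaf i
  le_card i := hS.le_card i
  not_adj_center i j hij := hS.not_adj_center i j fun h => hij (Subtype.ext h)
  not_adj_cross i j hij := hS.not_adj_cross i j fun h => hij (Subtype.ext h)
  not_heavy_cross i j hij := hS.not_heavy_cross i j fun h => hij (Subtype.ext h)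

theorem hasAnticompleteFamily_of_loose_small (hS : StarSystem G E n t v a B)
    (h : Setting G E n t C) (hF : FewTrapped G E n t C) {j : ι}
    (hj : (#(loose G t (B j)) : ℝ) < #(B j) / 2) :
    HasAnticompleteFamily G E (t ^ 813 * n / 2) (1 / t) := by
  have hC := h.le_exponent
  have hhalf : (#(B j) : ℝ) / 2 ≤ #{b ∈ B j | b ∉ loose G t (B j)} := by
    rw [filter_notMem_eq_sdiff, cast_card_sdiff (show loose G t (B j) ⊆ B j from filter_subset _ _)]
    linarith
  refine h.hasAnticompleteFamily_of_fewTrapped_dense hF (hS.center_mem j)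
    ((filter_subset _ _).trans (hS.leaves_subset j))
    (fun q hq => hS.adj_leaf j q (filter_subset _ _ hq)) ?_
    (sparse_compl_filter_notMem_loose h.scale_pos h.scale_le hhalf)
  linarith [hS.le_card j, h.pow_mul_le 813 (16 * C + 602) (by omega), h.pow_mul_pos 813]

theorem adj_of_common_nbr (hS : StarSystem G E n t v a B) (hG : ¬ cycleGraph 6 ⊴ G) {b : ι → V}
    (hb : ∀ i, b i ∈ B i) (hbc : ∀ i, G.Adj (b i) c) (hvc : ¬ G.Adj v c)
    (hac : ∀ i, ¬ G.Adj (a i) c) {i j : ι} (hij : i ≠ j) : G.Adj (b i) (b j) := by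
  by_contra hnadj
  exact hG <| cycleGraph_six_isIndContained (hS.adj_center i) (hS.adj_leaf i _ (hb i)) (hbc i)
    (hbc j).symm (hS.adj_leaf j _ (hb j)).symm (hS.adj_center j).symm
    (hS.not_adj_leaf i _ (hb i)) hvc (hS.not_adj_leaf j _ (hb j)) (hac i)
    (hS.not_adj_cross i j hij _ (hb j)) (hS.not_adj_center i j hij) hnadj
    (mt Adj.symm (hS.not_adj_cross j i hij.symm _ (hb i))) (mt Adj.symm (hac j))

theorem ne_and_not_adj_of_pairwise_adj (hS : StarSystem G E n t v a B) (hG : ¬ cycleGraph 6 ⊴ G)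
    {b : ι → V} (hb : ∀ i, b i ∈ B i) (hbb : Pairwise fun i j => G.Adj (b i) (b j)) {i j : ι}
    (hij : i ≠ j) {x y : V} (hxB : x ∈ B i) (hbx : ∀ m, ¬ G.Adj (b m) x) (hyB : y ∈ B j)
    (hby : ∀ m, ¬ G.Adj (b m) y) : x ≠ y ∧ ¬ G.Adj x y := by
  refine ⟨?_, fun hxy => hG <| cycleGraph_six_isIndContained (hS.adj_leaf i x hxB) hxy
    (hS.adj_leaf j y hyB).symm (hS.adj_leaf j _ (hb j)) (hbb hij.symm)
    (hS.adj_leaf i _ (hb i)).symm (hS.not_adj_cross i j hij y hyB)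
    (hS.not_adj_center i j hij) (hS.not_adj_cross i j hij _ (hb j))
    (mt Adj.symm (hS.not_adj_cross j i hij.symm x hxB)) (mt Adj.symm (hbx j))
    (mt Adj.symm (hbx i)) (mt Adj.symm (hby j)) (mt Adj.symm (hby i))
    (hS.not_adj_cross j i hij.symm _ (hb i))⟩
  rintro rfl
  exact hS.not_adj_cross i j hij x hyB (hS.adj_leaf i x hxB)

variable [Fintype ι]

theorem le_card_filter_not_adj (hS : StarSystem G E n t v a B) (ht : 0 < t) (ht1 : t ≤ 1 / 100)
    (hι : Fintype.card ι * t ^ 4 ≤ 2) {b : ι → V} (hb : ∀ i, b i ∈ loose G t (B i)) (j : ι) :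
    t ^ 832 * n ≤ #{y ∈ B j | ∀ i, ¬ G.Adj (b i) y} := by
  have hothers : count (B j) (fun y => ∃ i ∈ univ.erase j, G.Adj (b i) y) ≤
      2 * t ^ 20 * #(B j) := by
    refine count_exists_mem_le (u := t ^ 24) ?_ (Nat.cast_nonneg _) fun i hi => ?_
    · calc (#(univ.erase j) : ℝ) * t ^ 24 ≤ Fintype.card ι * t ^ 24 := by
            gcongr
            exact card_le_univ _
        _ = Fintype.card ι * t ^ 4 * t ^ 20 := by ring
        _ ≤ 2 * t ^ 20 := by gcongr
    · exact (not_le.1 (hS.not_heavy_cross j i (ne_of_mem_erase hi).symm _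
        (filter_subset _ _ (hb i)))).le
  have hsplit : count (B j) (fun y => ¬ G.Adj (b j) y) ≤
      count (B j) (fun y => ∀ i, ¬ G.Adj (b i) y) +
        count (B j) (fun y => ∃ i ∈ univ.erase j, G.Adj (b i) y) :=
    count_le_add fun y _ hy => or_iff_not_imp_left.2 fun hnot => by
      obtain ⟨i, hi⟩ := not_forall_not.1 hnot
      exact ⟨i, mem_erase.2 ⟨fun hij => hy (hij ▸ hi), mem_univ i⟩, hi⟩
  have hsize : t ^ 832 * n ≤ 2 * (t ^ 19 * #(B j)) := by
    calc t ^ 832 * n = 2 * (t ^ 19 * (t ^ 813 * n / 2)) := by ring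
      _ ≤ 2 * (t ^ 19 * #(B j)) := by
        gcongr
        exact hS.le_card j
  have hpos : 0 ≤ t ^ 18 * (#(B j) : ℝ) := by positivity
  rw [coe_card_filter]
  linarith [(mem_filter.1 (hb j)).2,
    pow_mul_le_of_lt ht ht1 (Nat.cast_nonneg #(B j)) (show 18 < 20 by norm_num),
    pow_mul_le_of_lt ht ht1 (Nat.cast_nonneg #(B j)) (show 18 < 19 by norm_num)]

theorem hasAnticompleteFamily_of_common_nbr (hS : StarSystem G E n t v a B)
    (h : Setting G E n t C) (hι : Fintype.card ι * t ^ 4 ≤ 2) {b : ι → V}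
    (hb : ∀ i, b i ∈ loose G t (B i)) (hbc : ∀ i, G.Adj (b i) c) (hvc : ¬ G.Adj v c)
    (hac : ∀ i, ¬ G.Adj (a i) c) :
    HasAnticompleteFamily G E (t ^ 832 * n) (Fintype.card ι) := by
  have hbB : ∀ i, b i ∈ B i := fun i => filter_subset _ _ (hb i)
  refine ⟨ι, inferInstance, fun j => {y ∈ B j | ∀ i, ¬ G.Adj (b i) y}, le_rfl,
    fun j => (filter_subset _ _).trans (hS.leaves_subset j),
    hS.le_card_filter_not_adj h.scale_pos h.scale_le hι hb, ?_⟩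
  intro i j hij x hx y hy
  obtain ⟨hxB, hbx⟩ := mem_filter.1 hx
  obtain ⟨hyB, hby⟩ := mem_filter.1 hy
  exact hS.ne_and_not_adj_of_pairwise_adj h.hexagon_free hbB
    (fun _ _ => hS.adj_of_common_nbr h.hexagon_free hbB hbc hvc hac) hij hxB hbx hyB hby

theorem le_count_far_hasNbrIn_loose (hS : StarSystem G E n t v a B) (h : Setting G E n t C)
    (hv : v ∈ E) (hι : Fintype.card ι * t ^ 4 ≤ 2) {j : ι}
    (hj : (#(B j) : ℝ) / 2 ≤ #(loose G t (B j))) :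
    t ^ 2 * n / 4 ≤ count E fun z =>
      (¬ G.Adj v z ∧ ∀ i, ¬ G.Adj (a i) z) ∧ HasNbrIn G (loose G t (B j)) z := by
  have hsub : loose G t (B j) ⊆ B j := filter_subset _ _
  have hexpand := h.expand_large _ (hsub.trans (hS.leaves_subset j)) <| by
    linarith [hS.le_card j, h.pow_mul_le 813 832, h.pow_mul_pos 813]
  have hsplit : count E (fun z => z ∈ loose G t (B j) ∨ HasNbrIn G (loose G t (B j)) z) ≤
      count E (fun z => (¬ G.Adj v z ∧ ∀ i, ¬ G.Adj (a i) z) ∧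
        HasNbrIn G (loose G t (B j)) z) +
      count E (fun z => G.Adj v z ∨ ∃ i ∈ univ, G.Adj (a i) z) :=
    count_le_add fun z _ hz => or_iff_not_imp_right.2 fun hfar => by
      simp only [mem_univ, true_and, not_or, not_exists] at hfar
      exact ⟨hfar, hz.resolve_left fun hzj => hfar.2 j (hS.adj_leaf j z (hsub hzj))⟩
  have hcenters : count E (fun z => ∃ i ∈ univ, G.Adj (a i) z) ≤ 2 * (t ^ 296 * n) := by
    refine (count_exists_mem_le (K := 2 * t ^ 296) (u := t ^ 300) ?_ h.size_pos.le
      fun i _ => h.degree_le _ (hS.center_mem i)).trans_eq (mul_assoc _ _ _)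
    calc (#(univ : Finset ι) : ℝ) * t ^ 300 = Fintype.card ι * t ^ 4 * t ^ 296 := by
          rw [card_univ]
          ring
      _ ≤ 2 * t ^ 296 := mul_le_mul_of_nonneg_right hι (pow_pos h.scale_pos _).le
  linarith [count_or_le E (G.Adj v) (fun z => ∃ i ∈ univ, G.Adj (a i) z), h.degree_le v hv,
    h.pow_mul_le 2 300, h.pow_mul_le 2 296, h.pow_mul_pos 2]

/-- If no leaf set is close to a clique, some vertex outside the system is a common neighbour of
loose leaves of many stars; these leaves form a clique, and their common non-neighbours in the
leaf sets are pairwise anticomplete. -/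
theorem hasAnticompleteFamily (hS : StarSystem G E n t v a B) (h : Setting G E n t C)
    (hF : FewTrapped G E n t C) (hv : v ∈ E) (hι : Fintype.card ι * t ^ 4 ≤ 2)
    (hι' : 1 ≤ Fintype.card ι * t ^ 4) :
    HasAnticompleteFamily G E (t ^ 832 * n) (1 / t) := by
  have ht := h.scale_pos
  by_cases hsmall : ∃ j, (#(loose G t (B j)) : ℝ) < #(B j) / 2
  · obtain ⟨j, hj⟩ := hsmall
    exact (hS.hasAnticompleteFamily_of_loose_small h hF hj).mono subset_rfl
      (by linarith [h.pow_mul_le 813 832, h.pow_mul_pos 813]) le_rfl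
  push Not at hsmall
  have hdouble : #E * (1 / t) < #(univ : Finset ι) * (t ^ 2 * n / 4) := by
    calc #E * (1 / t) ≤ n * (1 / t) := by gcongr; exact h.card_le
      _ = t * n / t ^ 2 := by field_simp
      _ < 1 * (n / 4) / t ^ 2 :=
        div_lt_div_of_pos_right (by nlinarith [h.scale_le, h.size_pos]) (pow_pos ht 2)
      _ ≤ Fintype.card ι * t ^ 4 * (n / 4) / t ^ 2 := by
        gcongr
        linarith [h.size_pos]
      _ = #(univ : Finset ι) * (t ^ 2 * n / 4) := by rw [card_univ]; field_simp
  obtain ⟨c, -, hc⟩ := exists_mem_le_count (R := fun z j =>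
    (¬ G.Adj v z ∧ ∀ i, ¬ G.Adj (a i) z) ∧ HasNbrIn G (loose G t (B j)) z)
    (fun j _ => hS.le_count_far_hasNbrIn_loose h hv hι (hsmall j)) hdouble
  obtain ⟨-, -, ⟨hvc, hac⟩, -⟩ := exists_mem_of_count_pos ((one_div_pos.2 ht).trans_le hc)
  choose b hb hbc using fun j : {j // (¬ G.Adj v c ∧ ∀ i, ¬ G.Adj (a i) c) ∧
    HasNbrIn G (loose G t (B j)) c} => j.2.2
  refine ((hS.restrict _).hasAnticompleteFamily_of_common_nbr h (le_trans ?_ hι) hb hbc hvc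
    fun i => hac i).mono subset_rfl le_rfl ?_
  · gcongr
    exact Fintype.card_subtype_le _
  · rwa [Fintype.card_subtype, coe_card_filter]

end StarSystem

theorem Setting.hasAnticompleteFamily_of_fewTrapped_sparse (h : Setting G E n t C)
    (hF : FewTrapped G E n t C) (hv : v ∈ E) (hXE : X ⊆ E) (hX : ∀ a ∈ X, G.Adj v a)
    (hXc : 2 * (t ^ (16 * C + 602) * n) ≤ #X) (hXs : Sparse G (t ^ 16) X) :
    HasAnticompleteFamily G E (t ^ 832 * n) (1 / t) := by
  have ht4 := pow_pos h.scale_pos 4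
  have hk := ceil_inv_mul_le ht4 (pow_le_of_pos h.scale_pos h.scale_le (by norm_num))
  have hk' : 1 ≤ (⌈1 / t ^ 4⌉₊ : ℝ) * t ^ 4 := by
    rw [← div_le_iff₀ ht4]
    exact Nat.le_ceil _
  obtain ⟨a, B, hS⟩ := hF.exists_starSystem h hv hXE hX hXc hXs hk
  refine hS.hasAnticompleteFamily h hF hv ?_ ?_ <;> rwa [Fintype.card_fin]

end Stars

/-! ### Anticomplete families in sparse hexagon-free sets -/

section Families

variable {V : Type*} {G : SimpleGraph V} {E S : Finset V} {n t : ℝ} {C : ℕ} {v : V}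

namespace Setting

theorem exists_restricted_filter (h : Setting G E n t C) {P : V → Prop} {a b : ℕ}
    (hP : t ^ a * n / 2 ≤ count E P) (hab : 16 * C + a < b) :
    ∃ X ⊆ E, (∀ x ∈ X, P x) ∧ 2 * (t ^ b * n) ≤ #X ∧ Restricted G (t ^ 16) X := by
  obtain ⟨X, hXP, hX, hXr⟩ := h.hasRestrictedSubset {x ∈ E | P x} (filter_subset _ _)
  refine ⟨X, hXP.trans (filter_subset _ _), fun x hx => (mem_filter.1 (hXP hx)).2, ?_, hXr⟩
  calc 2 * (t ^ b * n) ≤ t ^ (16 * C + a) * n / 2 := by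
        linarith [h.pow_mul_le _ _ hab, h.pow_mul_pos (16 * C + a)]
    _ = t ^ (16 * C) * (t ^ a * n / 2) := by ring
    _ ≤ t ^ (16 * C) * count E P := mul_le_mul_of_nonneg_left hP (pow_pos h.scale_pos _).le
    _ ≤ #X := by rwa [← coe_card_filter]

theorem hasAnticompleteFamily_of_fewTrapped (h : Setting G E n t C) (hE : n / 2 ≤ #E)
    (hF : FewTrapped G E n t C) : HasAnticompleteFamily G E (t ^ 832 * n) (1 / t) := by
  obtain ⟨v, hv, hdeg⟩ := h.exists_lt_degree E subset_rfl <| by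
    linarith [h.pow_mul_le 0 212, h.size_pos, pow_zero t]
  have hdeg' : t ^ 600 * n / 2 ≤ count E (G.Adj v) := by
    calc t ^ 600 * n / 2 = t ^ 600 * (n / 2) := by ring
      _ ≤ t ^ 600 * #E := mul_le_mul_of_nonneg_left hE (pow_pos h.scale_pos _).le
      _ ≤ count E (G.Adj v) := hdeg.le
  obtain ⟨X, hXE, hX, hXc, hXs | hXd⟩ := h.exists_restricted_filter hdeg'
    (show 16 * C + 600 < 16 * C + 602 by omega)
  · exact h.hasAnticompleteFamily_of_fewTrapped_sparse hF hv hXE hX hXc hXs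
  · exact (h.hasAnticompleteFamily_of_fewTrapped_dense hF hv hXE hX hXc hXd).mono subset_rfl
      (by linarith [h.pow_mul_le 813 832, h.pow_mul_pos 813]) le_rfl

theorem hasAnticompleteFamily_of_not_fewTrapped (h : Setting G E n t C)
    (hF : ¬ FewTrapped G E n t C) : HasAnticompleteFamily G E (t ^ 813 * n / 2) (1 / t) := by
  unfold FewTrapped at hF
  push Not at hF
  obtain ⟨v, hv, W, hW, hmany⟩ := hF
  obtain ⟨X, hXE, hX, hXc, hXs | hXd⟩ := h.exists_restricted_filter
    (P := Trapped G E (t ^ 813 * n) v W) (a := 16 * C + 602)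
    (by linarith [h.pow_mul_pos (16 * C + 602)])
    (show 16 * C + (16 * C + 602) < 32 * C + 603 by omega)
  · exact h.hasAnticompleteFamily_of_trapped_sparse hv hW hXE hX hXc hXs
  · exact h.hasAnticompleteFamily_of_trapped_dense hv hW hXE hX hXc hXd

theorem hasAnticompleteFamily (h : Setting G E n t C) (hE : n / 2 ≤ #E) :
    HasAnticompleteFamily G E (t ^ 832 * n) (1 / t) := by
  by_cases hF : FewTrapped G E n t C
  · exact h.hasAnticompleteFamily_of_fewTrapped hE hF
  · exact (h.hasAnticompleteFamily_of_not_fewTrapped hF).mono subset_rfl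
      (by linarith [h.pow_mul_le 813 832, h.pow_mul_pos 813]) le_rfl

end Setting

theorem exists_expanding (G : SimpleGraph V) {s τ : ℝ} (hτ : 0 ≤ τ) (r : ℕ) (S : Finset V) :
    HasAnticompleteFamily G S s r ∨ ∃ E ⊆ S, #S ≤ #E + r * τ ∧
      ∀ X ⊆ E, s ≤ #X → τ ≤ count E fun z => z ∈ X ∨ HasNbrIn G X z := by
  induction r generalizing S with
  | zero => exact Or.inl (by simpa using HasAnticompleteFamily.zero G S s)
  | succ r ih =>
    push_cast
    by_cases hS : ∀ X ⊆ S, s ≤ #X → τ ≤ count S fun z => z ∈ X ∨ HasNbrIn G X z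
    · exact Or.inr ⟨S, subset_rfl, le_add_of_nonneg_right (by positivity), hS⟩
    push Not at hS
    obtain ⟨X, hXS, hX, hXτ⟩ := hS
    set S' := {z ∈ S | ¬ (z ∈ X ∨ HasNbrIn G X z)}
    have hS' : S' ⊆ S := filter_subset _ _
    obtain hfam | ⟨E, hES, hE, hexp⟩ := ih S'
    · refine Or.inl (hfam.insert hS' hXS hX fun x hx y hy => ?_)
      obtain ⟨hyX, hXy⟩ := not_or.1 (mem_filter.1 hy).2
      exact ⟨fun hxy => hyX (hxy ▸ hx), fun hxy => hXy ⟨x, hx, hxy⟩⟩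
    · refine Or.inr ⟨E, hES.trans hS', ?_, hexp⟩
      have hsplit := count_add_count_not S fun z => z ∈ X ∨ HasNbrIn G X z
      rw [← coe_card_filter S fun z => ¬ (z ∈ X ∨ HasNbrIn G X z)] at hsplit
      linarith

theorem exists_expanding_of_pow {s : ℝ} (ht : 0 < t) (ht1 : t ≤ 1 / 100) {a b : ℕ} (ha : 0 < a)
    (hn : 0 ≤ n) (G : SimpleGraph V) (S : Finset V) :
    HasAnticompleteFamily G S s (1 / t ^ a) ∨ ∃ E ⊆ S, #S ≤ #E + 2 * (t ^ b * n) ∧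
      ∀ X ⊆ E, s ≤ #X → t ^ (a + b) * n ≤ count E fun z => z ∈ X ∨ HasNbrIn G X z := by
  refine (exists_expanding G (τ := t ^ (a + b) * n) (by positivity) ⌈1 / t ^ a⌉₊ S).imp
    (fun h => h.mono subset_rfl le_rfl (Nat.le_ceil _)) ?_
  rintro ⟨E, hES, hE, hexp⟩
  refine ⟨E, hES, hE.trans (add_le_add_right ?_ _), hexp⟩
  calc (⌈1 / t ^ a⌉₊ : ℝ) * (t ^ (a + b) * n) = ⌈1 / t ^ a⌉₊ * t ^ a * (t ^ b * n) := by ring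
    _ ≤ 2 * (t ^ b * n) := mul_le_mul_of_nonneg_right
      (ceil_inv_mul_le (pow_pos ht a) (pow_le_of_pos ht ht1 ha)) (by positivity)

/-- `S` is sparse at scale `t`, but none of its large subsets is much sparser, and every subset of
`S` has a large restricted subset. -/
structure Stuck (G : SimpleGraph V) (S : Finset V) (t : ℝ) (C : ℕ) : Prop where
  sparse : Sparse G (t ^ 300) S
  not_sparse : ∀ F ⊆ S, t ^ 212 * #S ≤ #F → ¬ Sparse G (t ^ 600) F
  hasRestrictedSubset : ∀ T ⊆ S, HasRestrictedSubset G (t ^ (16 * C)) (t ^ 16) T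

/-- Either family would do for the recursion that follows: if extracting the second one keeps
failing, the remaining set expands and hence contains the first one. -/
theorem Stuck.hasAnticompleteFamily (h : Stuck G S t C) (hG : ¬ cycleGraph 6 ⊴ G) (ht : 0 < t)
    (ht1 : t ≤ 1 / 100) (hC : 100 ≤ C) (hS : 1 ≤ t ^ (32 * C + 619) * #S) :
    HasAnticompleteFamily G S (t ^ 832 * #S) (1 / t) ∨
      HasAnticompleteFamily G S (t ^ (32 * C + 603) * #S) (1 / t ^ 200) := by
  have hpow {a b : ℕ} (hab : a < b) : t ^ b * (#S : ℝ) ≤ t ^ a * #S / 100 :=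
    pow_mul_le_of_lt ht ht1 (Nat.cast_nonneg _) hab
  have hnonneg (a : ℕ) : 0 ≤ t ^ a * (#S : ℝ) := by positivity
  obtain hfam | ⟨E', hE'S, hE', hexp'⟩ := exists_expanding_of_pow (s := t ^ 832 * #S) ht ht1
    (a := 1) (b := 1) one_pos (Nat.cast_nonneg #S) G S
  · exact Or.inl (by simpa using hfam)
  obtain hfam | ⟨E, hEE', hE, hexp⟩ := exists_expanding_of_pow (s := t ^ (32 * C + 603) * #S)
    ht ht1 (a := 200) (b := 4) (by norm_num) (Nat.cast_nonneg #S) G E'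
  · exact Or.inr (hfam.mono hE'S le_rfl le_rfl)
  have hES : E ⊆ S := hEE'.trans hE'S
  have hsetting : Setting G E #S t C :=
    { hexagon_free := hG
      scale_pos := ht
      scale_le := ht1
      le_exponent := hC
      one_le_pow_mul := hS
      degree_le := fun x hx => (count_mono hES fun _ _ h => h).trans (h.sparse x (hES hx))
      exists_lt_degree := fun F hF hFc => by
        simpa [Sparse] using h.not_sparse F (hF.trans hES) hFc
      card_le := by exact_mod_cast card_le_card hES
      expand := hexp
      expand_large := fun X hX hXc => by
        have hlarge : t ^ 2 * #S ≤ count E' fun z => z ∈ X ∨ HasNbrIn G X z :=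
          hexp' X (hX.trans hEE') hXc
        linarith [hpow (show 2 < 4 by norm_num), hnonneg 2,
          count_le_count_add_card_sub hEE' fun z => z ∈ X ∨ HasNbrIn G X z]
      hasRestrictedSubset := fun T hT => h.hasRestrictedSubset T (hT.trans hES) }
  refine Or.inl ((hsetting.hasAnticompleteFamily ?_).mono hES le_rfl le_rfl)
  linarith [hpow (show 0 < 1 by norm_num), hpow (show 0 < 4 by norm_num), hnonneg 0, pow_zero t,
    one_mul (#S : ℝ)]

end Families

/-! ### Rödl's theorem -/

section ThinPairs

variable {V : Type*} {G : SimpleGraph V} {A B S T : Finset V} {c σ s : ℝ} {m : ℕ}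

/-- `A` and `B` are disjoint and every vertex of `B` sees at most a `c`-fraction of `A`. -/
def ThinPair (G : SimpleGraph V) (c : ℝ) (A B : Finset V) : Prop :=
  Disjoint A B ∧ ∀ b ∈ B, count A (G.Adj b) ≤ c * #A

/-- No two subsets of `T` of size at least `σ` form a `c`-thin pair in the graph or in its
complement. -/
def WellMixed (G : SimpleGraph V) (c σ : ℝ) (T : Finset V) : Prop :=
  ∀ A ⊆ T, ∀ B ⊆ T, σ ≤ #A → σ ≤ #B → ¬ ThinPair G c A B ∧ ¬ ThinPair Gᶜ c A B

theorem WellMixed.exists_lt_count (hT : WellMixed G c σ T) (hAT : A ⊆ T) (hBT : B ⊆ T)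
    (hAB : Disjoint A B) (hA : σ ≤ #A) (hB : σ ≤ #B) (p : Prop) :
    ∃ b ∈ B, c * #A < count A fun z => G.Adj b z ↔ p := by
  obtain ⟨hthin, hthin'⟩ := hT A hAT B hBT hA hB
  by_cases hp : p
  · have hdense : ∃ b ∈ B, c * #A < count A (G.Adj b) := by simpa [ThinPair, hAB] using hthin
    simpa only [hp, iff_true] using hdense
  · have hdense : ∃ b ∈ B, c * #A < count A (Gᶜ.Adj b) := by simpa [ThinPair, hAB] using hthin'
    obtain ⟨b, hb, hlt⟩ := hdense
    exact ⟨b, hb, hlt.trans_le <| count_mono subset_rfl fun z _ hz =>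
      iff_of_false ((compl_adj _ _ _).1 hz).2 hp⟩

theorem WellMixed.exists_forall_lt_count (hT : WellMixed G c σ T) (hσ : 0 ≤ σ) (hBT : B ⊆ T)
    {A : Fin m → Finset V} (hAT : ∀ j, A j ⊆ T) (hAB : ∀ j, Disjoint (A j) B)
    (hA : ∀ j, σ ≤ #(A j)) (hB : m * σ < #B) (p : Fin m → Prop) :
    ∃ b ∈ B, ∀ j, c * #(A j) < count (A j) fun z => G.Adj b z ↔ p j := by
  have hfew : ∀ j, count B (fun b => ¬ c * #(A j) < count (A j) fun z => G.Adj b z ↔ p j) ≤ σ := by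
    intro j
    by_contra! hmany
    rw [← coe_card_filter] at hmany
    obtain ⟨b, hb, hlt⟩ := hT.exists_lt_count (hAT j) ((filter_subset _ _).trans hBT)
      (disjoint_of_subset_right (filter_subset _ _) (hAB j)) (hA j) hmany.le (p j)
    exact (mem_filter.1 hb).2.not_gt hlt
  have hbad := count_exists_mem_le (s := univ) (u := 1) (K := m) (by simp) hσ
    fun j _ => (hfew j).trans_eq (one_mul σ).symm
  have hsum := count_add_count_not B fun b => ∃ j ∈ univ,
    ¬ c * #(A j) < count (A j) fun z => G.Adj b z ↔ p j
  obtain ⟨b, hb, hgood⟩ := exists_mem_of_count_pos (A := B) (P := fun b => ¬ ∃ j ∈ univ,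
    ¬ c * #(A j) < count (A j) fun z => G.Adj b z ↔ p j) (by linarith)
  exact ⟨b, hb, by simpa only [mem_univ, true_and, not_exists, not_not] using hgood⟩

/-- The vertices are embedded one at a time; each of the remaining candidate sets shrinks by a
factor `c` at every step. -/
theorem WellMixed.exists_embedding (hT : WellMixed G c σ T) (hc : 0 < c) (hc1 : c ≤ 1)
    (hσ : 0 ≤ σ) (H : SimpleGraph (Fin m)) {A : Fin m → Finset V} (hAT : ∀ i, A i ⊆ T)
    (hA : ∀ i, m * σ < c ^ m * #(A i)) (hdisj : Pairwise fun i j => Disjoint (A i) (A j)) :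
    ∃ f : Fin m → V, (∀ i, f i ∈ A i) ∧ ∀ i j, G.Adj (f i) (f j) ↔ H.Adj i j := by
  induction m with
  | zero => exact ⟨Fin.elim0, fun i => i.elim0, fun i => i.elim0⟩
  | succ m ih =>
    push_cast at hA
    have hlarge (i) : (m + 1) * σ < #(A i) := (hA i).trans_le <|
      mul_le_of_le_one_left (Nat.cast_nonneg _) (pow_le_one₀ hc.le hc1)
    have hmσ : 0 ≤ m * σ := by positivity
    obtain ⟨v, hv, hvA⟩ := hT.exists_forall_lt_count hσ (hAT 0) (fun j : Fin m => hAT j.succ)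
      (fun j => hdisj j.succ_ne_zero) (fun j => by linarith [hlarge j.succ])
      (by linarith [hlarge 0]) fun j => H.Adj 0 j.succ
    have hsize (j : Fin m) :
        m * σ < c ^ m * #{z ∈ A j.succ | G.Adj v z ↔ H.Adj 0 j.succ} := by
      calc m * σ ≤ (m + 1) * σ := by linarith
        _ < c ^ (m + 1) * #(A j.succ) := hA j.succ
        _ = c ^ m * (c * #(A j.succ)) := by ring
        _ ≤ c ^ m * #{z ∈ A j.succ | G.Adj v z ↔ H.Adj 0 j.succ} := by
          rw [coe_card_filter]
          exact mul_le_mul_of_nonneg_left (hvA j).le (pow_pos hc m).le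
    obtain ⟨f, hf, hadj⟩ := ih (H.comap Fin.succ) (fun j => (filter_subset _ _).trans (hAT j.succ))
      hsize fun i j hij => disjoint_of_subset_left (filter_subset _ _) <|
        disjoint_of_subset_right (filter_subset _ _) (hdisj fun h => hij (Fin.succ_injective _ h))
    refine ⟨Fin.cons v f, Fin.cases hv fun j => filter_subset _ _ (hf j), ?_⟩
    have hvf (j) : G.Adj v (f j) ↔ H.Adj 0 j.succ := (mem_filter.1 (hf j)).2
    refine Fin.cases (Fin.cases (by simp) fun j => by simpa using hvf j) fun i =>
      Fin.cases ?_ fun j => by simpa using hadj i j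
    simpa [adj_comm] using hvf i

theorem exists_disjoint_parts (hm : m ≠ 0) (hT : m ≤ #T) :
    ∃ A : Fin m → Finset V, (∀ i, A i ⊆ T) ∧ (∀ i, (#T : ℝ) / (2 * m) ≤ #(A i)) ∧
      Pairwise fun i j => Disjoint (A i) (A j) := by
  obtain ⟨P, hP, hcard⟩ := Finpartition.exists_equipartition_card_eq T hm hT
  have hle : ∀ A ∈ P.parts, #T / m ≤ #A := fun A hA => hcard ▸ hP.average_le_card_part hA
  let e := P.parts.equivFinOfCardEq hcard
  refine ⟨fun i => e.symm i, fun i => P.le (e.symm i).2, fun i => ?_, fun i j hij =>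
    P.disjoint (e.symm i).2 (e.symm j).2 fun h => hij (e.symm.injective (Subtype.ext h))⟩
  have hlt : #T < 2 * m * (#T / m) := by
    nlinarith [Nat.lt_mul_div_succ #T (Nat.pos_of_ne_zero hm),
      Nat.mul_le_mul_left m (Nat.div_pos hT (Nat.pos_of_ne_zero hm))]
  rw [div_le_iff₀' (by positivity)]
  exact_mod_cast hlt.le.trans (Nat.mul_le_mul_left _ (hle _ (e.symm i).2))

theorem exists_thinPair_of_two_le_card (hc : 0 ≤ c) (hT : 2 ≤ #T) :
    ∃ A ⊆ T, ∃ B ⊆ T, 1 ≤ #A ∧ 1 ≤ #B ∧ (ThinPair G c A B ∨ ThinPair Gᶜ c A B) := by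
  obtain ⟨x, hx, y, hy, hxy⟩ := one_lt_card.1 hT
  have hthin {K : SimpleGraph V} (hyx : ¬ K.Adj y x) : ThinPair K c {x} {y} := by
    simpa [ThinPair, hxy, count, filter_singleton, hyx] using hc
  refine ⟨{x}, by simpa using hx, {y}, by simpa using hy, by simp, by simp, ?_⟩
  exact (em (G.Adj y x)).symm.imp hthin fun hyx =>
    hthin fun hyx' => ((compl_adj _ _ _).1 hyx').2 hyx

theorem exists_thinPair {H : SimpleGraph (Fin m)} (hG : ¬ H ⊴ G) (hc : 0 < c) (hc1 : c ≤ 1)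
    (hT : 2 ≤ #T) :
    ∃ A ⊆ T, ∃ B ⊆ T, c ^ m / (4 * m ^ 2) * #T ≤ #A ∧ c ^ m / (4 * m ^ 2) * #T ≤ #B ∧
      (ThinPair G c A B ∨ ThinPair Gᶜ c A B) := by
  have hm : m ≠ 0 := by
    rintro rfl
    exact hG ⟨⟨⟨Fin.elim0, fun i => i.elim0⟩, fun {i} => i.elim0⟩⟩
  have hm1 : (1 : ℝ) ≤ m := by exact_mod_cast Nat.one_le_iff_ne_zero.2 hm
  have hcm : 0 < c ^ m := pow_pos hc m
  obtain hlt | hle := lt_or_ge #T m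
  · obtain ⟨A, hA, B, hB, hAc, hBc, hAB⟩ := exists_thinPair_of_two_le_card (G := G) hc.le hT
    have hone : c ^ m / (4 * m ^ 2) * #T ≤ 1 := by
      have hTm : (#T : ℝ) ≤ m := by exact_mod_cast hlt.le
      rw [div_mul_eq_mul_div, div_le_one (by positivity)]
      have hcT : c ^ m * #T ≤ #T :=
        mul_le_of_le_one_left (Nat.cast_nonneg _) (pow_le_one₀ hc.le hc1)
      nlinarith
    exact ⟨A, hA, B, hB, hone.trans (Nat.one_le_cast.2 hAc), hone.trans (Nat.one_le_cast.2 hBc),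
      hAB⟩
  by_contra! hmixed
  obtain ⟨A, hAT, hA, hdisj⟩ := exists_disjoint_parts hm hle
  have : (0 : ℝ) < #T := by exact_mod_cast hT.trans_lt' two_pos
  have hsize (i) : m * (c ^ m / (4 * m ^ 2) * #T) < c ^ m * #(A i) := by
    calc m * (c ^ m / (4 * m ^ 2) * #T) = c ^ m * (#T / (2 * m)) / 2 := by field_simp; norm_num
      _ < c ^ m * (#T / (2 * m)) := half_lt_self (by positivity)
      _ ≤ c ^ m * #(A i) := mul_le_mul_of_nonneg_left (hA i) hcm.le
  obtain ⟨f, hf, hadj⟩ := WellMixed.exists_embedding hmixed hc hc1 (by positivity) H hAT hsize hdisj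
  have hinj : Function.Injective f := fun i j hij => by
    by_contra hne
    exact disjoint_left.1 (hdisj hne) (hf i) (hij ▸ hf j)
  exact hG ⟨⟨⟨f, hinj⟩, hadj _ _⟩⟩

/-- If `A` is the larger side, the vertices of `A` with few neighbours in `B` form most of `A`, so
the two sides may be exchanged. -/
theorem ThinPair.exists_balanced (h : ThinPair G (c / 2) A B) (hc : 0 < c) (hA : A ⊆ T)
    (hB : B ⊆ T) (hs : 0 < s) (hsA : s ≤ #A) (hsB : s ≤ #B) :
    ∃ A ⊆ T, ∃ B ⊆ T, s ≤ #A ∧ #A ≤ 2 * (#B : ℝ) ∧ ThinPair G c A B := by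
  obtain ⟨hdisj, hthin⟩ := h
  obtain hle | hlt := le_or_gt (#A : ℝ) #B
  · exact ⟨A, hA, B, hB, hsA, by linarith, hdisj,
      fun b hb => (hthin b hb).trans (by gcongr; linarith)⟩
  have hhalf : (#A : ℝ) / 2 ≤ #{a ∈ A | ¬ Heavy G c B a} := by
    have hheavy : count A (Heavy G c B) ≤ #A / 2 :=
      count_le_of_forall_count_le (d := c / 2 * #A) hc (nonempty_of_pos_of_le_card hs hsB)
        (fun b hb => by simpa only [G.adj_comm] using hthin b hb) (by linarith)
    rw [coe_card_filter]
    linarith [count_add_count_not A (Heavy G c B)]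
  exact ⟨B, hB, {a ∈ A | ¬ Heavy G c B a}, (filter_subset _ _).trans hA, hsB, by linarith,
    disjoint_of_subset_right (filter_subset _ _) hdisj.symm,
    fun a ha => (not_le.1 (mem_filter.1 ha).2).le⟩

end ThinPairs

section Blocks

variable {V : Type*} {G : SimpleGraph V} {A B S T : Finset V} {c d u δ γ ε : ℝ} {m p q : ℕ}

/-- `T` contains `p` disjoint blocks of size at least `u` such that every vertex of a block has at
most `c * u` neighbours in each later block. -/
def HasBlocks (G : SimpleGraph V) (T : Finset V) (u c : ℝ) (p : ℕ) : Prop :=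
  ∃ l : List (Finset V), l.length = p ∧ (∀ A ∈ l, A ⊆ T ∧ u ≤ #A) ∧
    l.Pairwise fun B A => Disjoint B A ∧ ∀ b ∈ B, count A (G.Adj b) ≤ c * u

theorem HasBlocks.zero (G : SimpleGraph V) (T : Finset V) (u c : ℝ) : HasBlocks G T u c 0 :=
  ⟨[], rfl, by simp, List.Pairwise.nil⟩

theorem HasBlocks.mono (h : HasBlocks G A u c p) (hA : A ⊆ T) : HasBlocks G T u c p := by
  obtain ⟨l, hl, hblock, hpair⟩ := h
  exact ⟨l, hl, fun X hX => ⟨(hblock X hX).1.trans hA, (hblock X hX).2⟩, hpair⟩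

theorem HasBlocks.cons (h : HasBlocks G A u c p) (hA : A ⊆ T) (hB : B ⊆ T) (hu : u ≤ #B)
    (hthin : ThinPair G d A B) (hd : d * #A ≤ c * u) : HasBlocks G T u c (p + 1) := by
  obtain ⟨l, hl, hblock, hpair⟩ := h
  refine ⟨B :: l, by simp [hl], List.forall_mem_cons.2 ⟨⟨hB, hu⟩, fun X hX =>
    ⟨(hblock X hX).1.trans hA, (hblock X hX).2⟩⟩, List.pairwise_cons.2 ⟨fun X hX => ?_, hpair⟩⟩
  have hXA := (hblock X hX).1
  exact ⟨(disjoint_of_subset_left hXA hthin.1).symm, fun b hb =>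
    (count_mono hXA fun _ _ h => h).trans ((hthin.2 b hb).trans hd)⟩

/-- Every set of at least `K` vertices contains, for a suitable `u` proportional to its size, `p`
blocks of the graph or `q` blocks of its complement. -/
def ForcesBlocks (G : SimpleGraph V) (c δ K : ℝ) (p q : ℕ) : Prop :=
  ∀ T : Finset V, K ≤ #T → ∃ u, δ * #T ≤ u ∧ u ≤ #T / 2 ∧
    (HasBlocks G T u c p ∨ HasBlocks Gᶜ T u c q)

variable {K K' δ' : ℝ}

theorem ForcesBlocks.compl (h : ForcesBlocks G c δ K p q) : ForcesBlocks Gᶜ c δ K q p := by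
  intro T hT
  obtain ⟨u, hle, hu, hblocks⟩ := h T hT
  exact ⟨u, hle, hu, by simpa only [compl_compl] using hblocks.symm⟩

theorem ForcesBlocks.mono (h : ForcesBlocks G c δ K p q) (hδ : δ' ≤ δ) (hK : K ≤ K') :
    ForcesBlocks G c δ' K' p q := fun T hT => by
  obtain ⟨u, hle, hu, hblocks⟩ := h T (hK.trans hT)
  exact ⟨u, (mul_le_mul_of_nonneg_right hδ (Nat.cast_nonneg _)).trans hle, hu, hblocks⟩

theorem ForcesBlocks.zero_left (G : SimpleGraph V) (c : ℝ) (q : ℕ) :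
    ForcesBlocks G c (1 / 2) 0 0 q := fun T _ =>
  ⟨#T / 2, by linarith, le_rfl, Or.inl (HasBlocks.zero _ _ _ _)⟩

theorem ForcesBlocks.exists_of_thinPair (h : ForcesBlocks G c δ K p q) (hc : 0 < c) (hδ : 0 < δ)
    (hγ : 0 < γ * #T) (hK : K ≤ γ * #T) (hA : A ⊆ T) (hB : B ⊆ T) (hAc : γ * #T ≤ #A)
    (hBc : γ * #T ≤ #B) (hthin : ThinPair G (c * δ / 2) A B) :
    ∃ u, δ * γ * #T ≤ u ∧ u ≤ #T / 2 ∧ (HasBlocks G T u c (p + 1) ∨ HasBlocks Gᶜ T u c q) := by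
  obtain ⟨A, hA, B, hB, hAc, hAB, hthin⟩ := hthin.exists_balanced (mul_pos hc hδ) hA hB hγ hAc hBc
  obtain ⟨u, hle, hu, hblocks⟩ := h A (hK.trans hAc)
  have hAT : (#A : ℝ) ≤ #T := by exact_mod_cast card_le_card hA
  refine ⟨u, ?_, by linarith, hblocks.imp (fun h => h.cons hA hB (by linarith) hthin ?_)
    fun h => h.mono hA⟩
  · exact (mul_assoc δ γ _).trans_le ((mul_le_mul_of_nonneg_left hAc hδ.le).trans hle)
  · exact (mul_assoc c δ _).trans_le (mul_le_mul_of_nonneg_left hle hc.le)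

theorem ForcesBlocks.step {H : SimpleGraph (Fin m)} (hG : ¬ H ⊴ G) (hc : 0 < c) (hδ : 0 < δ)
    (hcδ : c * δ / 2 ≤ 1) (hp : ForcesBlocks G c δ K p (q + 1))
    (hq : ForcesBlocks G c δ K (p + 1) q) (hγ : γ = (c * δ / 2) ^ m / (4 * m ^ 2)) (hγ0 : 0 < γ) :
    ForcesBlocks G c (δ * γ) (max 2 (K / γ)) (p + 1) (q + 1) := by
  intro T hT
  have hT2 : (2 : ℝ) ≤ #T := (le_max_left _ _).trans hT
  have hK : K ≤ γ * #T := (div_le_iff₀' hγ0).1 ((le_max_right _ _).trans hT)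
  have hpos : 0 < γ * #T := mul_pos hγ0 (by linarith)
  obtain ⟨A, hA, B, hB, hAc, hBc, hthin | hthin⟩ := exists_thinPair hG
    (half_pos (mul_pos hc hδ)) hcδ (show 2 ≤ #T by exact_mod_cast hT2)
  · exact hp.exists_of_thinPair hc hδ hpos hK hA hB (hγ ▸ hAc) (hγ ▸ hBc) hthin
  · obtain ⟨u, hle, hu, hblocks⟩ := hq.compl.exists_of_thinPair hc hδ hpos hK hA hB (hγ ▸ hAc)
      (hγ ▸ hBc) hthin
    exact ⟨u, hle, hu, by simpa only [compl_compl] using hblocks.symm⟩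

theorem exists_forcesBlocks (H : SimpleGraph (Fin m)) (hc : 0 < c) (hc1 : c ≤ 1) (p q : ℕ) :
    ∃ δ, 0 < δ ∧ δ ≤ 1 / 2 ∧ ∃ K, ∀ (V : Type*) (G : SimpleGraph V), ¬ H ⊴ G →
      ForcesBlocks G c δ K p q := by
  obtain rfl | hm := m.eq_zero_or_pos
  · exact ⟨1 / 2, by norm_num, le_rfl, 0, fun V G hG => (hG (.of_isEmpty)).elim⟩
  induction p generalizing q with
  | zero => exact ⟨1 / 2, by norm_num, le_rfl, 0, fun V G _ => .zero_left G c q⟩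
  | succ p ihp =>
    induction q with
    | zero =>
      exact ⟨1 / 2, by norm_num, le_rfl, 0, fun V G _ => by
        simpa only [compl_compl] using (ForcesBlocks.zero_left Gᶜ c (p + 1)).compl⟩
    | succ q ihq =>
      obtain ⟨δ₁, hδ₁, hδ₁', K₁, hp⟩ := ihp (q + 1)
      obtain ⟨δ₂, hδ₂, -, K₂, hq⟩ := ihq
      have hδ : 0 < min δ₁ δ₂ := lt_min hδ₁ hδ₂
      have hδ1 : min δ₁ δ₂ ≤ 1 / 2 := (min_le_left _ _).trans hδ₁'
      have hcδ : c * min δ₁ δ₂ / 2 ≤ 1 := by nlinarith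
      have hm1 : (1 : ℝ) ≤ m := Nat.one_le_cast.2 hm
      have hγ0 : 0 < (c * min δ₁ δ₂ / 2) ^ m / (4 * m ^ 2) := by positivity
      have hγ1 : (c * min δ₁ δ₂ / 2) ^ m / (4 * m ^ 2) ≤ 1 :=
        div_le_one_of_le₀ ((pow_le_one₀ (by positivity) hcδ).trans (by nlinarith)) (by positivity)
      exact ⟨_, mul_pos hδ hγ0, (mul_le_of_le_one_right hδ.le hγ1).trans hδ1, _, fun V G hG =>
        .step hG hc hδ hcδ ((hp V G hG).mono (min_le_left _ _) (le_max_left _ _))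
          ((hq V G hG).mono (min_le_right _ _) (le_max_right K₁ K₂)) rfl hγ0⟩

end Blocks

section Averaging

variable {V : Type*} {G : SimpleGraph V} {A B S T U : Finset V} {c u ε y : ℝ} {m p s : ℕ}

theorem count_union (h : Disjoint A B) (P : V → Prop) :
    count (A ∪ B) P = count A P + count B P := by
  unfold count
  rw [filter_union]
  exact_mod_cast card_union_of_disjoint (disjoint_filter_filter h)

theorem sum_count_adj_union (h : Disjoint A B) :
    ∑ x ∈ A ∪ B, count (A ∪ B) (G.Adj x) = ∑ x ∈ A, count A (G.Adj x) +
      2 * ∑ x ∈ A, count B (G.Adj x) + ∑ x ∈ B, count B (G.Adj x) := by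
  have hcomm : ∑ x ∈ B, count A (G.Adj x) = ∑ x ∈ A, count B (G.Adj x) := by
    simpa only [G.adj_comm] using sum_count_comm B A G.Adj
  simp only [count_union h, sum_union h, sum_add_distrib, hcomm]
  ring

theorem exists_sparse_of_sum_count_adj_le (hε : 0 < ε)
    (hU : ∑ x ∈ U, count U (G.Adj x) ≤ ε / 4 * #U ^ 2) :
    ∃ S ⊆ U, (#U : ℝ) / 2 ≤ #S ∧ Sparse G ε S := by
  obtain rfl | hne := U.eq_empty_or_nonempty
  · exact ⟨∅, subset_rfl, by simp, by simp [Sparse]⟩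
  have : (0 : ℝ) < #U := Nat.cast_pos.2 hne.card_pos
  have hbad : count U (fun x => ε / 2 * #U ≤ count U (G.Adj x)) ≤ #U / 2 := by
    refine le_of_mul_le_mul_left ?_ (by positivity : 0 < ε / 2 * #U)
    calc _ ≤ ∑ x ∈ U, count U (G.Adj x) := mul_count_le_sum (fun _ _ => count_nonneg _ _) _
      _ ≤ ε / 4 * #U ^ 2 := hU
      _ = ε / 2 * #U * (#U / 2) := by ring
  have hhalf : (#U : ℝ) / 2 ≤ #{x ∈ U | ¬ ε / 2 * #U ≤ count U (G.Adj x)} := by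
    rw [coe_card_filter]
    linarith [count_add_count_not U fun x => ε / 2 * #U ≤ count U (G.Adj x)]
  refine ⟨_, filter_subset _ _, hhalf, fun x hx => ?_⟩
  calc _ ≤ count U (G.Adj x) := count_mono (filter_subset _ _) fun _ _ h => h
    _ ≤ ε / 2 * #U := (not_le.1 (mem_filter.1 hx).2).le
    _ = ε * (#U / 2) := by ring
    _ ≤ _ := mul_le_mul_of_nonneg_left hhalf hε.le

theorem count_le_length_mul {P : V → Prop} {d : ℝ} {l : List (Finset V)}
    (hU : ∀ z ∈ U, ∃ A ∈ l, z ∈ A) (hd : 0 ≤ d) (h : ∀ A ∈ l, count A P ≤ d) :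
    count U P ≤ l.length * d := by
  have hinter : ∀ A ∈ l, count U (fun z => z ∈ A ∧ P z) ≤ 1 * d := fun A hA => by
    refine le_trans ?_ ((h A hA).trans_eq (one_mul d).symm)
    simp only [← coe_card_filter]
    exact Nat.cast_le.2 (card_le_card fun z hz => by simp only [mem_filter] at hz ⊢; exact hz.2)
  refine (count_mono subset_rfl fun z hz hPz => ?_).trans
    (count_exists_mem_list_le zero_le_one (mul_one _).le hd hinter)
  obtain ⟨A, hA, hzA⟩ := hU z hz
  exact ⟨A, hA, hzA, hPz⟩

theorem exists_union_of_blocks (hc : 0 ≤ c) (l : List (Finset V)) (hl : ∀ A ∈ l, A ⊆ T ∧ s ≤ #A)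
    (hpair : l.Pairwise fun B A => Disjoint B A ∧ ∀ b ∈ B, count A (G.Adj b) ≤ c * s) :
    ∃ U ⊆ T, #U = l.length * s ∧ (∀ z ∈ U, ∃ A ∈ l, z ∈ A) ∧
      ∑ x ∈ U, count U (G.Adj x) ≤ (l.length + c * l.length ^ 2) * s ^ 2 := by
  induction l with
  | nil => exact ⟨∅, by simp, by simp, by simp, by simp⟩
  | cons B l ih =>
    obtain ⟨hB, hpair⟩ := List.pairwise_cons.1 hpair
    obtain ⟨⟨hBT, hBs⟩, hl⟩ := List.forall_mem_cons.1 hl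
    obtain ⟨U, hUT, hUcard, hUl, hUsum⟩ := ih hl hpair
    obtain ⟨B', hB'B, hB'card⟩ := exists_subset_card_eq hBs
    have hdisj : Disjoint B' U := disjoint_left.2 fun z hz hzU => by
      obtain ⟨A, hA, hzA⟩ := hUl z hzU
      exact disjoint_left.1 (hB A hA).1 (hB'B hz) hzA
    have hcross : ∀ b ∈ B', count U (G.Adj b) ≤ l.length * (c * s) := fun b hb =>
      count_le_length_mul hUl (by positivity) fun A hA => (hB A hA).2 b (hB'B hb)
    refine ⟨B' ∪ U, union_subset (hB'B.trans hBT) hUT, ?_, fun z hz => ?_, ?_⟩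
    · rw [card_union_of_disjoint hdisj, hB'card, hUcard, List.length_cons]
      ring
    · obtain hz | hz := mem_union.1 hz
      · exact ⟨B, List.mem_cons_self, hB'B hz⟩
      · exact (hUl z hz).imp fun A hA => ⟨List.mem_cons_of_mem _ hA.1, hA.2⟩
    · have hcrossSum := sum_le_card_nsmul _ _ _ hcross
      have hinner := sum_le_card_nsmul B' (fun x => count B' (G.Adj x)) _ fun x _ =>
        count_le_card B' (G.Adj x)
      rw [hB'card, nsmul_eq_mul] at hcrossSum hinner
      rw [sum_count_adj_union hdisj, List.length_cons]
      push_cast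
      nlinarith [mul_nonneg hc (sq_nonneg (s : ℝ))]

theorem HasBlocks.exists_sparse (h : HasBlocks G T u (ε / 8) p) (hε : 0 < ε) (hu : 0 < u)
    (hp : 8 / ε ≤ p) : ∃ S ⊆ T, u / 2 ≤ #S ∧ Sparse G ε S := by
  obtain ⟨l, rfl, hblock, hpair⟩ := h
  have hus : u ≤ ⌈u⌉₊ := Nat.le_ceil u
  have : (0 : ℝ) < ⌈u⌉₊ := hu.trans_le hus
  obtain ⟨U, hUT, hUcard, -, hUsum⟩ := exists_union_of_blocks (by positivity : 0 ≤ ε / 8) l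
    (fun A hA => (hblock A hA).imp_right Nat.ceil_le.2) <| hpair.imp fun h =>
      h.imp_right fun h b hb => (h b hb).trans (by gcongr)
  have hlength : 8 ≤ ε * l.length := (div_le_iff₀' hε).1 hp
  have hlength1 : (1 : ℝ) ≤ l.length := Nat.one_le_cast.2 <| Nat.pos_of_ne_zero fun h => by
    norm_num [h] at hlength
  have hUcard' : (#U : ℝ) = l.length * ⌈u⌉₊ := by exact_mod_cast hUcard
  have hdensity : ∑ x ∈ U, count U (G.Adj x) ≤ ε / 4 * #U ^ 2 := by
    refine hUsum.trans ?_
    calc _ ≤ (ε / 4 * l.length ^ 2) * (⌈u⌉₊ : ℝ) ^ 2 := by gcongr; nlinarith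
      _ = ε / 4 * #U ^ 2 := by rw [hUcard']; ring
  obtain ⟨S, hSU, hUS, hS⟩ := exists_sparse_of_sum_count_adj_le hε hdensity
  refine ⟨S, hSU.trans hUT, le_trans ?_ hUS, hS⟩
  rw [hUcard']
  nlinarith

theorem Sparse.of_card_le_one (h : #S ≤ 1) (hy : 0 ≤ y) : Sparse G y S := fun x hx => by
  have hzero : count S (G.Adj x) = 0 := by
    rw [count, Nat.cast_eq_zero, card_eq_zero, filter_eq_empty_iff]
    exact fun z hz hxz => hxz.ne (card_le_one.1 h x hx z hz)
  rw [hzero]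
  positivity

theorem hasRestrictedSubset_of_mul_card_le_one (G : SimpleGraph V) (hy : 0 ≤ y)
    (h : c * #T ≤ 1) : HasRestrictedSubset G c y T := by
  obtain rfl | ⟨x, hx⟩ := T.eq_empty_or_nonempty
  · exact ⟨∅, subset_rfl, by simp, Or.inl (Sparse.of_card_le_one (by simp) hy)⟩
  · exact ⟨{x}, by simpa using hx, by simpa using h, Or.inl (Sparse.of_card_le_one (by simp) hy)⟩

/-- Rödl's theorem. -/
theorem exists_forall_hasRestrictedSubset (H : SimpleGraph (Fin m)) (hε : 0 < ε) (hε1 : ε ≤ 1) :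
    ∃ δ : ℝ, 0 < δ ∧ ∀ (V : Type*) (G : SimpleGraph V), ¬ H ⊴ G →
      ∀ T : Finset V, HasRestrictedSubset G δ ε T := by
  obtain ⟨δ, hδ, -, K, hK⟩ := exists_forcesBlocks H (by positivity : 0 < ε / 8) (by linarith)
    ⌈8 / ε⌉₊ ⌈8 / ε⌉₊
  have hL : 0 < max K 1 := lt_max_of_lt_right one_pos
  refine ⟨min (δ / 2) (1 / max K 1), lt_min (half_pos hδ) (one_div_pos.2 hL), fun V G hG T => ?_⟩
  obtain hT | hT := lt_or_ge (#T : ℝ) (max K 1)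
  · refine hasRestrictedSubset_of_mul_card_le_one G hε.le ?_
    calc _ ≤ 1 / max K 1 * #T := by gcongr; exact min_le_right _ _
      _ ≤ 1 := by rw [one_div_mul_eq_div]; exact div_le_one_of_le₀ hT.le hL.le
  · obtain ⟨u, hle, -, hblocks⟩ := hK V G hG T ((le_max_left _ _).trans hT)
    have hu : 0 < u := (mul_pos hδ (hL.trans_le hT)).trans_le hle
    have hδu : min (δ / 2) (1 / max K 1) * #T ≤ u / 2 := by
      have := mul_le_mul_of_nonneg_right (min_le_left (δ / 2) (1 / max K 1)) (#T).cast_nonneg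
      linarith
    obtain hblocks | hblocks := hblocks
    · obtain ⟨S, hST, huS, hS⟩ := hblocks.exists_sparse hε hu (Nat.le_ceil _)
      exact ⟨S, hST, hδu.trans huS, Or.inl hS⟩
    · obtain ⟨S, hST, huS, hS⟩ := hblocks.exists_sparse hε hu (Nat.le_ceil _)
      exact ⟨S, hST, hδu.trans huS, Or.inr hS⟩

end Averaging

/-! ### From families to restricted sets -/

section Products

variable {V : Type*} {G : SimpleGraph V} {A B S T U : Finset V} {k s u w y : ℝ} {m r : ℕ}

theorem Anticomplete.disjoint (h : Anticomplete G A B) : Disjoint A B :=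
  disjoint_left.2 fun x hxA hxB => (h x hxA x hxB).1 rfl

theorem Anticomplete.ssubset (h : Anticomplete G A B) (hA : A ⊆ T) (hB : B ⊆ T)
    (hne : B.Nonempty) : A ⊂ T := by
  obtain ⟨x, hx⟩ := hne
  exact (ssubset_iff_of_subset hA).2 ⟨x, hB hx, fun hxA => (h x hxA x hx).1 rfl⟩

theorem HasAnticompleteFamily.one (h : s ≤ #T) : HasAnticompleteFamily G T s 1 :=
  ⟨Unit, inferInstance, fun _ => T, by simp, fun _ => subset_rfl, fun _ => h,
    fun i j hij => absurd (Subsingleton.elim i j) hij⟩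

theorem HasAnticompleteFamily.sum {ι : Type} [Fintype ι] {B : ι → Finset V} {p : ι → ℕ}
    (hBT : ∀ i, B i ⊆ T) (hB : Pairwise fun i j => Anticomplete G (B i) (B j))
    (h : ∀ i, HasAnticompleteFamily G (B i) s (p i)) :
    HasAnticompleteFamily G T s (∑ i, p i : ℕ) := by
  choose κ hκ D hcard hDB hD hanti using h
  refine ⟨Σ i, κ i, inferInstance, fun a => D a.1 a.2, ?_, fun a => (hDB a.1 a.2).trans (hBT a.1),
    fun a => hD a.1 a.2, ?_⟩
  · rw [Fintype.card_sigma]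
    exact Nat.cast_le.2 (sum_le_sum fun i _ => Nat.cast_le.1 (hcard i))
  · rintro ⟨i, a⟩ ⟨j, b⟩ hij
    obtain rfl | hne := eq_or_ne i j
    · exact hanti i fun hab => hij (congrArg (Sigma.mk i) hab)
    · exact fun x hx y hy => hB hne x (hDB i a hx) y (hDB j b hy)

theorem HasAnticompleteFamily.exists_sparse (h : HasAnticompleteFamily G T s k) (hy : 0 < y)
    (hk : 1 / y ≤ k) : ∃ S ⊆ T, s ≤ #S ∧ Sparse G y S := by
  obtain ⟨ι, hι, B, hcard, hBT, hB, hanti⟩ := h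
  choose D hDB hD using fun i => exists_subset_card_eq (Nat.ceil_le.2 (hB i))
  have hUcard : #(univ.biUnion D) = Fintype.card ι * ⌈s⌉₊ := by
    rw [card_biUnion fun i _ j _ hij =>
      ((hanti hij).disjoint.mono_left (hDB i)).mono_right (hDB j)]
    simp [hD]
  have hyι : 1 ≤ y * Fintype.card ι := (div_le_iff₀' hy).1 (hk.trans hcard)
  have hι0 : 0 < Fintype.card ι := Nat.pos_of_ne_zero fun h => by norm_num [h] at hyι
  refine ⟨univ.biUnion D, biUnion_subset.2 fun i _ => (hDB i).trans (hBT i), ?_, fun x hx => ?_⟩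
  · rw [hUcard]
    exact (Nat.le_ceil s).trans (Nat.cast_le.2 (Nat.le_mul_of_pos_left _ hι0))
  · obtain ⟨i, -, hxi⟩ := mem_biUnion.1 hx
    have hnbr : ∀ z ∈ univ.biUnion D, G.Adj x z → z ∈ D i := fun z hz hxz => by
      obtain ⟨j, -, hzj⟩ := mem_biUnion.1 hz
      by_contra hzi
      have hij : i ≠ j := fun hij => hzi (hij ▸ hzj)
      exact (hanti hij x (hDB i hxi) z (hDB j hzj)).2 hxz
    calc count (univ.biUnion D) (G.Adj x) ≤ #(D i) := by
          rw [← coe_card_filter]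
          exact Nat.cast_le.2 (card_le_card fun z hz =>
            hnbr z (mem_filter.1 hz).1 (mem_filter.1 hz).2)
      _ ≤ y * Fintype.card ι * ⌈s⌉₊ := by
          rw [hD]
          exact le_mul_of_one_le_left (Nat.cast_nonneg _) hyι
      _ = y * #(univ.biUnion D) := by
          rw [hUcard]
          push_cast
          ring

/-- `T` contains at least `k ≥ 2` pairwise anticomplete sets of size at least
`max s (|T| / k ^ r)`: the number of sets pays polynomially for what they lose in size. -/
def HasRichFamily (G : SimpleGraph V) (s : ℝ) (r : ℕ) (T : Finset V) : Prop :=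
  ∃ k u : ℝ, 2 ≤ k ∧ s ≤ u ∧ #T ≤ u * k ^ r ∧ HasAnticompleteFamily G T u k

/-- `T` contains `p` pairwise anticomplete and `q` pairwise complete sets of size at least `s`,
where `p * q` is polynomially large in `|T| / w`. -/
def HasProduct (G : SimpleGraph V) (w s : ℝ) (r : ℕ) (T : Finset V) : Prop :=
  ∃ p q : ℕ, HasAnticompleteFamily G T s p ∧ HasAnticompleteFamily Gᶜ T s q ∧
    #T ≤ w * (p * q : ℝ) ^ r

theorem HasProduct.compl (h : HasProduct G w s r T) : HasProduct Gᶜ w s r T := by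
  obtain ⟨p, q, hp, hq, hpq⟩ := h
  exact ⟨q, p, hq, by rwa [compl_compl], by rwa [mul_comm (q : ℝ)]⟩

/-- The anticomplete families of the parts add up, so it is enough to keep one complete family, that
of the part with the smallest anticomplete family. -/
theorem HasProduct.sum {ι : Type} [Fintype ι] [Nonempty ι] {B : ι → Finset V} (hw : 0 ≤ w)
    (hBT : ∀ i, B i ⊆ T) (hB : Pairwise fun i j => Anticomplete G (B i) (B j))
    (hu : ∀ i, u ≤ #(B i)) (hT : #T ≤ u * (Fintype.card ι : ℝ) ^ r)
    (h : ∀ i, HasProduct G w s r (B i)) : HasProduct G w s r T := by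
  choose p q hp hq hpq using h
  obtain ⟨i, -, hmin⟩ := exists_min_image univ p univ_nonempty
  have hsum : (Fintype.card ι : ℝ) * p i ≤ (∑ j, p j : ℕ) := by
    have := card_nsmul_le_sum univ p (p i) hmin
    rw [card_univ, smul_eq_mul] at this
    exact_mod_cast this
  refine ⟨∑ j, p j, q i, .sum hBT hB hp, (hq i).mono (hBT i) le_rfl le_rfl, ?_⟩
  calc (#T : ℝ) ≤ u * (Fintype.card ι : ℝ) ^ r := hT
    _ ≤ w * (p i * q i : ℝ) ^ r * (Fintype.card ι : ℝ) ^ r := by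
        gcongr
        exact (hu i).trans (hpq i)
    _ = w * (Fintype.card ι * p i * q i : ℝ) ^ r := by
        rw [mul_assoc, ← mul_pow]
        ring
    _ ≤ _ := by gcongr

theorem HasRichFamily.hasProduct (h : HasRichFamily G s r T) (hs : 0 < s) (hsw : s ≤ w)
    (hT : w ≤ #T) (ih : ∀ B ⊂ T, w ≤ #B → HasProduct G w s r B) : HasProduct G w s r T := by
  obtain ⟨k, u, hk, hsu, hTu, ι, hι, B, hcard, hBT, hu, hB⟩ := h
  have hTι : #T ≤ u * (Fintype.card ι : ℝ) ^ r :=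
    hTu.trans (mul_le_mul_of_nonneg_left (by gcongr) (hs.le.trans hsu))
  obtain huw | hwu := lt_or_ge u w
  · refine ⟨Fintype.card ι, 1, ⟨ι, hι, B, le_rfl, hBT, fun i => hsu.trans (hu i), hB⟩,
      by simpa using HasAnticompleteFamily.one (hsw.trans hT), hTι.trans ?_⟩
    rw [Nat.cast_one, mul_one]
    gcongr
  · have hι2 : 1 < Fintype.card ι := by
      have : (2 : ℝ) ≤ Fintype.card ι := hk.trans hcard
      exact_mod_cast this
    have : Nonempty ι := Fintype.card_pos_iff.1 (by omega)
    have hlt : ∀ i, B i ⊂ T := fun i => by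
      obtain ⟨j, hj⟩ := Fintype.exists_ne_of_one_lt_card hι2 i
      exact (hB hj.symm).ssubset (hBT i) (hBT j)
        (nonempty_of_pos_of_le_card (hs.trans_le hsu) (hu j))
    exact .sum (hs.le.trans hsw) hBT hB hu hTι fun i => ih (B i) (hlt i) (hwu.trans (hu i))

theorem hasProduct_of_forall_hasRichFamily (hs : 0 < s) (hsw : s ≤ w)
    (h : ∀ T ⊆ U, w ≤ #T → HasRichFamily G s r T ∨ HasRichFamily Gᶜ s r T) :
    ∀ T ⊆ U, w ≤ #T → HasProduct G w s r T := by
  intro T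
  induction T using Finset.strongInduction with
  | H T ih =>
    intro hTU hT
    have ih' : ∀ B ⊂ T, w ≤ #B → HasProduct G w s r B := fun B hB =>
      ih B hB (hB.subset.trans hTU)
    obtain hrich | hrich := h T hTU hT
    · exact hrich.hasProduct hs hsw hT ih'
    · simpa only [compl_compl] using
        (hrich.hasProduct hs hsw hT fun B hB hw => (ih' B hB hw).compl).compl

theorem hasRestrictedSubset_of_forall_hasRichFamily (hy : 0 < y) (hy1 : y ≤ 1) (hr : r ≠ 0)
    (hm : 2 * r ≤ m) (hU : U.Nonempty) (h : ∀ T ⊆ U, y ^ (2 * r) * #U ≤ #T →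
      HasRichFamily G (y ^ m * #U) r T ∨ HasRichFamily Gᶜ (y ^ m * #U) r T) :
    HasRestrictedSubset G (y ^ m) y U := by
  have hU0 : (0 : ℝ) < #U := Nat.cast_pos.2 hU.card_pos
  obtain ⟨p, q, hp, hq, hpq⟩ := hasProduct_of_forall_hasRichFamily (by positivity)
    (mul_le_mul_of_nonneg_right (pow_le_pow_of_le_one hy.le hy1 hm) hU0.le) h U subset_rfl
    (mul_le_of_le_one_left hU0.le (pow_le_one₀ hy.le hy1))
  have hprod : 1 ≤ y ^ 2 * (p * q) := by
    refine (one_le_pow_iff_of_nonneg (by positivity) hr).1 (le_of_mul_le_mul_right ?_ hU0)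
    rw [mul_pow, ← pow_mul]
    linarith
  have hlarge : 1 / y ≤ p ∨ 1 / y ≤ q := by
    simp only [div_le_iff₀' hy]
    by_contra! hlt
    nlinarith [mul_lt_one_of_nonneg_of_lt_one_left (by positivity) hlt.1 hlt.2.le]
  refine hlarge.elim (fun hp' => ?_) fun hq' => ?_
  · obtain ⟨S, hSU, hcard, hS⟩ := hp.exists_sparse hy hp'
    exact ⟨S, hSU, hcard, Or.inl hS⟩
  · obtain ⟨S, hSU, hcard, hS⟩ := hq.exists_sparse hy hq'
    exact ⟨S, hSU, hcard, Or.inr hS⟩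

end Products

/-! ### Induction on the scale -/

section Scales

variable {V : Type*} {G : SimpleGraph V} {S T : Finset V} {s t t₀ y : ℝ} {b C m n r : ℕ}

theorem exists_pow_two_pow_le (ht₀ : 0 ≤ t₀) (ht₀1 : t₀ < 1) (hy : 0 < y) :
    ∃ n, t₀ ^ 2 ^ n ≤ y := by
  obtain ⟨n, hn⟩ := exists_pow_lt_of_lt_one hy ht₀1
  exact ⟨n, (pow_le_pow_of_le_one ht₀ ht₀1.le Nat.lt_two_pow_self.le).trans hn.le⟩

theorem exists_and_not_sq {P : ℝ → Prop} (ht₀ : 0 < t₀) (ht₀1 : t₀ < 1) (hy : 0 < y) (h₀ : P t₀)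
    (hP : ∀ t, 0 < t → t ≤ t₀ → P t → y < t) : ∃ t, 0 < t ∧ t ≤ t₀ ∧ P t ∧ ¬ P (t ^ 2) := by
  by_contra! hsq
  have hpos (n : ℕ) : 0 < t₀ ^ 2 ^ n := by positivity
  have hle (n : ℕ) : t₀ ^ 2 ^ n ≤ t₀ := pow_le_of_le_one ht₀.le ht₀1.le (by positivity)
  have hall (n : ℕ) : P (t₀ ^ 2 ^ n) := by
    induction n with
    | zero => simpa using h₀
    | succ n ih =>
      rw [pow_succ 2, pow_mul]
      exact hsq _ (hpos n) (hle n) ih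
  obtain ⟨n, hn⟩ := exists_pow_two_pow_le ht₀.le ht₀1 hy
  exact hn.not_gt (hP _ (hpos n) (hle n) (hall n))

theorem forall_pos_of_forall_le_sq {P : ℝ → Prop} (ht₀ : 0 < t₀) (ht₀1 : t₀ < 1)
    (h₀ : ∀ y, t₀ ≤ y → P y)
    (hstep : ∀ y, 0 < y → y < t₀ → (∀ z, 0 < z → y ≤ z ^ 2 → P z) → P y) :
    ∀ y, 0 < y → P y := by
  have hmain (n : ℕ) : ∀ y, t₀ ^ 2 ^ n ≤ y → P y := by
    induction n with
    | zero => simpa using h₀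
    | succ n ih =>
      intro y hy
      obtain hyt | hty := lt_or_ge y t₀
      · refine hstep y ((by positivity : 0 < t₀ ^ 2 ^ (n + 1)).trans_le hy) hyt fun z hz hyz =>
          ih z ?_
        rw [pow_succ 2, pow_mul] at hy
        exact le_of_sq_le_sq (hy.trans hyz) hz.le
      · exact h₀ y hty
  intro y hy
  obtain ⟨n, hn⟩ := exists_pow_two_pow_le ht₀.le ht₀1 hy
  exact hmain n y hn

/-- The polynomial form of Rödl's theorem at scale `y`: every vertex set has a `y`-restricted
subset of relative size `y ^ C`. -/
def PolynomialRodl (G : SimpleGraph V) (C : ℕ) (y : ℝ) : Prop :=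
  ∀ T : Finset V, HasRestrictedSubset G (y ^ C) y T

theorem PolynomialRodl.compl (h : PolynomialRodl G C y) : PolynomialRodl Gᶜ C y := fun T =>
  hasRestrictedSubset_compl.2 (h T)

theorem HasAnticompleteFamily.hasRichFamily (h : HasAnticompleteFamily G S (t ^ m * #S) (1 / t ^ b))
    (ht : 0 < t) (ht1 : t ≤ 1 / 100) (hb : 0 < b) (hr : m + n ≤ b * r) (hST : S ⊆ T)
    (hS : t ^ n * #T ≤ #S) (hs : s ≤ t ^ m * #S) : HasRichFamily G s r T := by
  refine ⟨1 / t ^ b, t ^ m * #S, ?_, hs, ?_, h.mono hST le_rfl le_rfl⟩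
  · rw [le_div_iff₀ (by positivity)]
    linarith [pow_le_of_pos ht ht1 hb]
  · rw [div_pow, one_pow, ← pow_mul, mul_one_div, le_div_iff₀ (by positivity), mul_comm]
    calc t ^ (b * r) * (#T : ℝ) ≤ t ^ (m + n) * #T := by
          gcongr ?_ * _
          exact pow_le_pow_of_le_one ht.le (by linarith) hr
      _ = t ^ m * (t ^ n * #T) := by ring
      _ ≤ t ^ m * #S := by gcongr

theorem Stuck.hasRichFamily (h : Stuck G S t (3 * r)) (hG : ¬ cycleGraph 6 ⊴ G) (ht : 0 < t)
    (ht1 : t ≤ 1 / 100) (hr : n + 1000 ≤ r) (hST : S ⊆ T) (hS : t ^ n * #T ≤ #S) (hs1 : 1 ≤ s)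
    (hs : s ≤ t ^ (32 * (3 * r) + 619) * #S) : HasRichFamily G s r T := by
  have hs' {m : ℕ} (hm : m ≤ 32 * (3 * r) + 619) : s ≤ t ^ m * #S :=
    hs.trans (mul_le_mul_of_nonneg_right (pow_le_pow_of_le_one ht.le (by linarith) hm)
      (Nat.cast_nonneg _))
  obtain hfam | hfam := h.hasAnticompleteFamily hG ht ht1 (by omega) (hs1.trans hs)
  · rw [← pow_one t, ← pow_mul, one_mul] at hfam
    exact hfam.hasRichFamily ht ht1 one_pos (by omega) hST hS (hs' (by omega))
  · exact hfam.hasRichFamily ht ht1 (by norm_num) (by omega) hST hS (hs' (by omega))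

theorem PolynomialRodl.stuck (h : PolynomialRodl G C (t ^ 16)) (ht : 0 < t) (ht1 : t ≤ 1)
    (hn : 212 ≤ n) (hST : S ⊆ T) (hcard : t ^ n * #T ≤ #S) (hS : Sparse G (t ^ 300) S)
    (hT : ¬ HasRestrictedSubset G ((t ^ 2) ^ n) ((t ^ 2) ^ 300) T) : Stuck G S t C where
  sparse := hS
  not_sparse F hFS hF hsparse := by
    refine hT ⟨F, hFS.trans hST, ?_, Or.inl (by rwa [← pow_mul])⟩
    calc (t ^ 2) ^ n * (#T : ℝ) = t ^ n * (t ^ n * #T) := by ring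
      _ ≤ t ^ 212 * #S := mul_le_mul (pow_le_pow_of_le_one ht.le ht1 hn) hcard (by positivity)
        (by positivity)
      _ ≤ #F := hF
  hasRestrictedSubset X _ := by
    rw [pow_mul]
    exact h X

theorem exists_stuck_scale (hy : 0 < y) (hy1 : y < (1 / 100) ^ 300) (hnr : 2 * n ≤ 300 * r)
    (h₀ : HasRestrictedSubset G ((1 / 100) ^ n) ((1 / 100) ^ 300) T)
    (hT : ¬ HasRestrictedSubset G (y ^ r) y T) :
    ∃ t, 0 < t ∧ t ≤ 1 / 100 ∧ y < t ^ 300 ∧ HasRestrictedSubset G (t ^ n) (t ^ 300) T ∧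
      ¬ HasRestrictedSubset G ((t ^ 2) ^ n) ((t ^ 2) ^ 300) T := by
  obtain ⟨t, ht, ht1, ⟨hyt, hTt⟩, hsq⟩ := exists_and_not_sq
    (P := fun t => y < t ^ 300 ∧ HasRestrictedSubset G (t ^ n) (t ^ 300) T) (by norm_num)
    (by norm_num) hy ⟨hy1, h₀⟩
    fun t ht ht1 h => h.1.trans_le (pow_le_of_le_one ht.le (by linarith) (by norm_num))
  refine ⟨t, ht, ht1, hyt, hTt, fun hTt2 => ?_⟩
  obtain hlt | hle := lt_or_ge y ((t ^ 2) ^ 300)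
  · exact hsq ⟨hlt, hTt2⟩
  refine hT (hTt2.mono subset_rfl (mul_le_mul_of_nonneg_right ?_ (Nat.cast_nonneg _)) hle)
  calc y ^ r ≤ (t ^ 300) ^ r := pow_le_pow_left₀ hy.le hyt.le r
    _ ≤ (t ^ 2) ^ n := by
      rw [← pow_mul, ← pow_mul]
      exact pow_le_pow_of_le_one ht.le (by linarith) hnr

theorem hasRichFamily_or_compl (hG : ¬ cycleGraph 6 ⊴ G) (hGc : ¬ cycleGraph 6 ⊴ Gᶜ)
    (hn : 212 ≤ n) (hr : n + 1000 ≤ r) (hy : 0 < y) (hy1 : y < (1 / 100) ^ 300)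
    (h₀ : HasRestrictedSubset G ((1 / 100) ^ n) ((1 / 100) ^ 300) T)
    (hlarge : ∀ z, 0 < z → z ≤ 1 / 100 → y ≤ z ^ 2 → PolynomialRodl G (3 * r) z)
    (hT : ¬ HasRestrictedSubset G (y ^ r) y T) (hs1 : 1 ≤ s) (hs : s ≤ y ^ r * #T) :
    HasRichFamily G s r T ∨ HasRichFamily Gᶜ s r T := by
  obtain ⟨t, ht, ht1, hyt, ⟨S, hST, hcard, hS⟩, hstuck⟩ :=
    exists_stuck_scale hy hy1 (by omega) h₀ hT
  have hsS : s ≤ t ^ (32 * (3 * r) + 619) * #S := by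
    calc s ≤ y ^ r * #T := hs
      _ ≤ (t ^ 300) ^ r * #T := by gcongr
      _ ≤ t ^ (32 * (3 * r) + 619 + n) * #T := by
        rw [← pow_mul]
        gcongr ?_ * _
        exact pow_le_pow_of_le_one ht.le (by linarith) (by omega)
      _ = t ^ (32 * (3 * r) + 619) * (t ^ n * #T) := by ring
      _ ≤ _ := by gcongr
  have hz : PolynomialRodl G (3 * r) (t ^ 16) := hlarge _ (pow_pos ht _)
    (pow_le_of_pos ht ht1 (by norm_num)) <| by
      rw [← pow_mul]
      exact hyt.le.trans (pow_le_pow_of_le_one ht.le (by linarith) (by norm_num))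
  exact hS.imp
    (fun hS => (hz.stuck ht (by linarith) hn hST hcard hS hstuck).hasRichFamily hG ht ht1 hr hST
      hcard hs1 hsS)
    fun hS => (hz.compl.stuck ht (by linarith) hn hST hcard hS
      (mt hasRestrictedSubset_compl.1 hstuck)).hasRichFamily hGc ht ht1 hr hST hcard hs1 hsS

theorem PolynomialRodl.of_forall_le_sq (hG : ¬ cycleGraph 6 ⊴ G) (hGc : ¬ cycleGraph 6 ⊴ Gᶜ)
    (hn : 212 ≤ n) (hr : n + 1000 ≤ r) (hy : 0 < y) (hy1 : y < (1 / 100) ^ 300)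
    (h₀ : ∀ T, HasRestrictedSubset G ((1 / 100) ^ n) ((1 / 100) ^ 300) T)
    (hlarge : ∀ z, 0 < z → z ≤ 1 / 100 → y ≤ z ^ 2 → PolynomialRodl G (3 * r) z) :
    PolynomialRodl G (3 * r) y := by
  intro U
  obtain hsmall | hbig := le_or_gt (y ^ (3 * r) * #U) 1
  · exact hasRestrictedSubset_of_mul_card_le_one G hy.le hsmall
  by_contra hU
  refine hU (hasRestrictedSubset_of_forall_hasRichFamily (r := r) hy
    (hy1.le.trans (pow_le_one₀ (by norm_num) (by norm_num))) (by omega) (by omega)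
    (nonempty_iff_ne_empty.2 fun h => by norm_num [h] at hbig) fun T hTU hT => ?_)
  have hsT : y ^ (3 * r) * #U ≤ y ^ r * #T := by
    calc y ^ (3 * r) * (#U : ℝ) = y ^ r * (y ^ (2 * r) * #U) := by ring
      _ ≤ y ^ r * #T := by gcongr
  exact hasRichFamily_or_compl hG hGc hn hr hy hy1 (h₀ T) hlarge
    (fun h => hU (h.mono hTU hsT le_rfl)) hbig.le hsT

theorem exists_polynomialRodl : ∃ C : ℕ, 0 < C ∧ ∀ (V : Type*) (G : SimpleGraph V),
    ¬ cycleGraph 6 ⊴ G → ¬ cycleGraph 6 ⊴ Gᶜ →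
      ∀ y, 0 < y → y ≤ 1 / 100 → PolynomialRodl G C y := by
  obtain ⟨δ, hδ, hRodl⟩ := exists_forall_hasRestrictedSubset (cycleGraph 6)
    (ε := (1 / 100) ^ 300) (by positivity) (pow_le_one₀ (by norm_num) (by norm_num))
  obtain ⟨e, he⟩ := exists_pow_lt_of_lt_one hδ (by norm_num : (1 / 100 : ℝ) < 1)
  refine ⟨3 * (e + 212 + 1000), by omega, fun V G hG hGc => ?_⟩
  have h₀ (T : Finset V) : HasRestrictedSubset G ((1 / 100) ^ (e + 212)) ((1 / 100) ^ 300) T :=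
    (hRodl V G hG T).mono subset_rfl (mul_le_mul_of_nonneg_right
      ((pow_le_pow_of_le_one (by norm_num) (by norm_num) (by omega)).trans he.le)
      (Nat.cast_nonneg _)) le_rfl
  refine forall_pos_of_forall_le_sq (t₀ := (1 / 100) ^ 300) (by positivity)
    (pow_lt_one₀ (by norm_num) (by norm_num) (by norm_num)) (fun y hty hy1 T => ?_)
    fun y hy hyt hlarge _ => .of_forall_le_sq hG hGc (by omega) le_rfl hy hyt h₀
      fun z hz hz1 hyz => hlarge z hz hyz hz1
  have hy : 0 ≤ y := (by positivity : (0 : ℝ) ≤ (1 / 100) ^ 300).trans hty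
  refine (h₀ T).mono subset_rfl (mul_le_mul_of_nonneg_right ?_ (Nat.cast_nonneg _)) hty
  exact (pow_le_pow_left₀ hy hy1 _).trans
    (pow_le_pow_of_le_one (by norm_num) (by norm_num) (by omega))

end Scales

/-! ### Cliques and stable sets -/

section Cliques

variable {V : Type*} {G : SimpleGraph V} {S : Finset V} {y : ℝ} {C : ℕ}

theorem Sparse.exists_isClique_compl (h : Sparse G y S) :
    ∃ I ⊆ S, Gᶜ.IsClique (I : Set V) ∧ (#S : ℝ) ≤ #I * (y * #S + 1) := by
  obtain ⟨I, hI, hmax⟩ := exists_max_image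
    (S.powerset.filter fun I : Finset V => Gᶜ.IsClique (I : Set V)) card ⟨∅, by simp⟩
  obtain ⟨hIS, hclique⟩ := mem_filter.1 hI
  rw [mem_powerset] at hIS
  refine ⟨I, hIS, hclique, ?_⟩
  have hdom : ∀ z ∈ S, z ∈ I ∨ ∃ x ∈ I, G.Adj x z := fun z hz => by
    by_contra! hfree
    have hinsert : insert z I ∈ S.powerset.filter fun I : Finset V => Gᶜ.IsClique (I : Set V) := by
      rw [mem_filter, mem_powerset, coe_insert, isClique_insert]
      exact ⟨insert_subset hz hIS, hclique, fun x hx hzx =>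
        (compl_adj _ _ _).2 ⟨hzx, fun hadj => hfree.2 x hx hadj.symm⟩⟩
    exact (hmax _ hinsert).not_gt (card_lt_card (ssubset_insert hfree.1))
  have hI : count S (· ∈ I) ≤ #I := by
    rw [← coe_card_filter]
    exact Nat.cast_le.2 (card_le_card fun z hz => (mem_filter.1 hz).2)
  have hyS : 0 ≤ y * #S := by
    obtain rfl | ⟨x, hx⟩ := S.eq_empty_or_nonempty
    · simp
    · exact (count_nonneg _ _).trans (h x hx)
  have hnbr : count S (fun z => ∃ x ∈ I, G.Adj x z) ≤ #I * (y * #S) :=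
    count_exists_mem_le (mul_one _).le hyS
      fun x hx => (h x (hIS hx)).trans_eq (one_mul _).symm
  calc (#S : ℝ) = count S fun _ => True := by simp [count]
    _ ≤ count S (· ∈ I) + count S fun z => ∃ x ∈ I, G.Adj x z :=
      count_le_add fun z hz _ => hdom z hz
    _ ≤ #I * (y * #S + 1) := by linarith

variable [Fintype V]

theorem Restricted.le_max_cliqueNum (h : Restricted G y S) (hy : 0 < y) (hS : 1 ≤ y * #S) :
    1 / (2 * y) ≤ ((max Gᶜ.cliqueNum G.cliqueNum : ℕ) : ℝ) := by
  have hS0 : (0 : ℝ) < #S := pos_of_mul_pos_right (one_pos.trans_le hS) hy.le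
  have hsparse {H : SimpleGraph V} (hH : Sparse H y S) : 1 / (2 * y) ≤ (Hᶜ.cliqueNum : ℝ) := by
    obtain ⟨I, -, hI, hcard⟩ := hH.exists_isClique_compl
    refine le_trans ?_ (Nat.cast_le.2 hI.card_le_cliqueNum)
    rw [div_le_iff₀ (by positivity)]
    refine le_of_mul_le_mul_right ?_ hS0
    calc 1 * (#S : ℝ) ≤ #I * (y * #S + 1) := (one_mul _).trans_le hcard
      _ ≤ #I * (y * #S + y * #S) := by gcongr
      _ = #I * (2 * y) * #S := by ring
  rw [Nat.cast_max]
  refine h.elim (fun h => le_max_of_le_left (hsparse h)) fun h => le_max_of_le_right ?_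
  simpa only [compl_compl] using hsparse h

theorem min_card_two_le_max_cliqueNum (G : SimpleGraph V) :
    min (Fintype.card V) 2 ≤ max Gᶜ.cliqueNum G.cliqueNum := by
  obtain hV | hV := le_or_gt (Fintype.card V) 1
  · have := Fintype.card_le_one_iff_subsingleton.1 hV
    refine (min_le_left _ _).trans (le_max_of_le_right ?_)
    rw [← card_univ]
    exact IsClique.card_le_cliqueNum (tc := fun x _ z _ hxz => absurd (Subsingleton.elim x z) hxz)
  · obtain ⟨a, b, hab⟩ := Fintype.one_lt_card_iff.1 hV
    refine (min_le_right _ _).trans ?_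
    rw [← card_pair hab]
    by_cases hadj : G.Adj a b
    · refine le_max_of_le_right (IsClique.card_le_cliqueNum (tc := ?_))
      rw [coe_pair, isClique_pair]
      exact fun _ => hadj
    · refine le_max_of_le_left (IsClique.card_le_cliqueNum (tc := ?_))
      rw [coe_pair, isClique_pair]
      exact fun _ => (compl_adj _ _ _).2 ⟨hab, hadj⟩

theorem rpow_card_le_max_cliqueNum (hC : 0 < C)
    (h : ∀ y, 0 < y → y ≤ 1 / 100 → PolynomialRodl G C y) :
    (Fintype.card V : ℝ) ^ (1 / (16 * C) : ℝ) ≤ ((max Gᶜ.cliqueNum G.cliqueNum : ℕ) : ℝ) := by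
  have hC1 : (1 : ℝ) ≤ C := Nat.one_le_cast.2 hC
  set z := (Fintype.card V : ℝ) ^ (1 / (16 * C) : ℝ) with hz
  have hz0 : 0 ≤ z := by positivity
  have hzn : z ^ (16 * C) = Fintype.card V := by
    rw [hz, ← Real.rpow_natCast, ← Real.rpow_mul (Nat.cast_nonneg _)]
    push_cast
    rw [one_div, inv_mul_cancel₀ (by positivity), Real.rpow_one]
  obtain hz2 | hz2 := le_or_gt z 2
  · have hzV : z ≤ Fintype.card V := by
      obtain hV | hV := (Fintype.card V).eq_zero_or_pos
      · rw [hz, hV, Nat.cast_zero, Real.zero_rpow (by positivity)]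
      · exact Real.rpow_le_self_of_one_le (Nat.one_le_cast.2 hV)
          (div_le_one_of_le₀ (by linarith) (by positivity))
    calc z ≤ ((min (Fintype.card V) 2 : ℕ) : ℝ) := by
          rw [Nat.cast_min]
          exact le_min hzV hz2
      _ ≤ _ := Nat.cast_le.2 (min_card_two_le_max_cliqueNum G)
  · have hz7 : 2 ^ 7 ≤ z ^ 7 := pow_le_pow_left₀ (by norm_num) hz2.le 7
    have hz8 : 2 ^ 8 ≤ z ^ 8 := pow_le_pow_left₀ (by norm_num) hz2.le 8
    obtain ⟨S, -, hcard, hS⟩ := h (1 / z ^ 8) (by positivity)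
      (one_div_le_one_div_of_le (by norm_num) (by linarith)) univ
    have hzS : z ^ 8 ≤ #S := by
      calc z ^ 8 ≤ z ^ (8 * C) := pow_le_pow_right₀ (by linarith) (by omega)
        _ = (1 / z ^ 8) ^ C * z ^ (16 * C) := by
          rw [show 16 * C = 8 * C + 8 * C by ring, pow_add, pow_mul, ← mul_assoc, ← mul_pow,
            one_div_mul_cancel (by positivity), one_pow, one_mul]
        _ ≤ #S := by rwa [hzn, ← card_univ]
    calc z ≤ 1 / (2 * (1 / z ^ 8)) := by
          rw [show 1 / (2 * (1 / z ^ 8)) = z ^ 7 * z / 2 by field_simp]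
          nlinarith
      _ ≤ _ := hS.le_max_cliqueNum (by positivity) <| by
          rwa [one_div_mul_eq_div, one_le_div (by positivity)]

end Cliques

end ErdosHajnal

/-- `{C₆, C̄₆}` has the Erdős–Hajnal property. -/
theorem stmt_2 :
    ∃ τ : ℝ, 0 < τ ∧
      ∀ (V : Type) [Fintype V] (G : SimpleGraph V),
        ¬ Nonempty (cycleGraph 6 ↪g G) →
        ¬ Nonempty ((cycleGraph 6)ᶜ ↪g G) →
        (Fintype.card V : ℝ) ^ τ ≤ ((max (alphaNum G) (omegaNum G) : ℕ) : ℝ) := by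
  obtain ⟨C, hC, hRodl⟩ := ErdosHajnal.exists_polynomialRodl
  refine ⟨1 / (16 * C), by positivity, fun V _ G hG hGc => ?_⟩
  have hGc' : ¬ cycleGraph 6 ⊴ Gᶜ := fun h => hGc <| by
    have := compl_isIndContained_compl.2 h
    rwa [compl_compl] at this
  exact ErdosHajnal.rpow_card_le_max_cliqueNum hC (hRodl V G hG hGc')
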